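/- Let G be a connected simple graph on n vertices whose block decomposition consists of k ≥ 1 blocks, and suppose that every block of G either has maximum degree at most 3 or is claw-free. Then G has a spanning closed walk of length at most 4n/3 + 2k/3 − 4/3. -/

import Mathlib

open SimpleGraph

/-- A block of a graph `G`: a maximal vertex set inducing a connected subgraph
without a cut vertex. -/
def IsBlock {V : Type*} (G : SimpleGraph V) (B : Set V) : Prop :=
  (G.induce B).Connected ∧
  (∀ v ∈ B, (G.induce (B \ {v})).Preconnected) ∧
  ∀ B' : Set V, B ⊆ B' → (G.induce B').Connected →
    (∀ v ∈ B', (G.induce (B' \ {v})).Preconnected) → B' = B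

/-!
Take a normal (depth-first search) spanning tree and walk along every tree edge twice, in total
`2 (n - 1)` steps. Back edges allow savings. Call a tree edge covered if some back edge bypasses it
and the tree edge directly above it; distinct uncovered tree edges lie in distinct blocks, so at
most `k` tree edges are uncovered.

Choose a set `S` of back edges that covers all covered tree edges, with upper ends as high as
possible. Move the upper end of each of these back edges down by one tree edge. Together with the
covered tree edges they form a bridgeless multigraph, and a bridgeless multigraph has an even edge
set that contains two thirds of any given weight; so some even edge set contains at least two
thirds of the covered tree edges. Using its back edges in the tour, and saving one traversal of
each of its tree edges and of each tree edge by which a back edge was lowered, keeps all degrees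
even. No tree edge is saved more than twice, because the lower ends of the back edges of `S`
lowered along the same tree edge are independent neighbours of its upper end, by the choice of `S`,
and blocks contain few of these. Hence the length of the tour is `2 (n - 1)` minus two thirds of
the number of covered tree edges.
-/

/-! ### Even edge sets and joins -/

/-- A multigraph with vertices in `V` and edges in `E`; loops and parallel edges are allowed. The
orientation given by `src` and `tgt` only serves to name the two ends of an edge. -/
structure Multigraph (V E : Type*) where
  src : E → V
  tgt : E → V

namespace Multigraph

section Incidence

variable {V E : Type*} (M : Multigraph V E)

/-- The ends of the edge `e` are `a` and `b`. -/
def Link (e : E) (a b : V) : Prop :=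
  M.src e = a ∧ M.tgt e = b ∨ M.src e = b ∧ M.tgt e = a

/-- The edge `e` belongs to the star of `b`: exactly one of its ends is `b`. -/
def InStar (b : V) (e : E) : Prop := ¬(M.src e = b ↔ M.tgt e = b)

instance [DecidableEq V] (b : V) : DecidablePred (M.InStar b) :=
  fun _ => inferInstanceAs (Decidable ¬_)

variable {M} {a b c : V} {e : E}

theorem Link.symm (h : M.Link e a b) : M.Link e b a := Or.symm h

theorem Link.inStar (h : M.Link e b c) (hc : c ≠ b) : M.InStar b e := by
  rcases h with ⟨rfl, rfl⟩ | ⟨rfl, rfl⟩ <;> simp [InStar, hc]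

theorem InStar.exists_link (h : M.InStar b e) : ∃ c ≠ b, M.Link e b c := by
  unfold InStar at h
  rcases eq_or_ne (M.src e) b with hs | hs
  · exact ⟨M.tgt e, by tauto, .inl ⟨hs, rfl⟩⟩
  · exact ⟨M.src e, hs, .inr ⟨rfl, by tauto⟩⟩

theorem InStar.src_ne_tgt (h : M.InStar b e) : M.src e ≠ M.tgt e :=
  fun hst => h (by rw [hst])

end Incidence

section Joins

variable {V E : Type*} [DecidableEq V] (M : Multigraph V E)

/-- The indicator of a vertex as a vector over the two-element field. -/
abbrev delta (v : V) : V → ZMod 2 := Pi.single v 1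

/-- The boundary of an edge set over the two-element field: the parities of the degrees, loops
counting twice. -/
def boundary (F : Finset E) : V → ZMod 2 := ∑ e ∈ F, (delta (M.src e) + delta (M.tgt e))

/-- An even edge set, or element of the cycle space: all degrees are even. -/
def IsEven (F : Finset E) : Prop := M.boundary F = 0

/-- `F` is a join of `a` and `b`: if `a ≠ b` these are its only vertices of odd degree, and if
`a = b` it is even. -/
def Joins (F : Finset E) (a b : V) : Prop := M.boundary F = delta a + delta b

variable {M} {F F' : Finset E} {a b c : V} {e : E}

theorem isEven_empty : M.IsEven ∅ := Finset.sum_empty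

theorem isEven_iff_joins (a : V) : M.IsEven F ↔ M.Joins F a a := by
  rw [IsEven, Joins, ZModModule.add_self]

theorem IsEven.joins (h : M.IsEven F) (a : V) : M.Joins F a a := (isEven_iff_joins a).1 h

theorem Joins.isEven (h : M.Joins F a a) : M.IsEven F := (isEven_iff_joins a).2 h

theorem Joins.symm (h : M.Joins F a b) : M.Joins F b a := h.trans (add_comm _ _)

theorem boundary_apply (v : V) : M.boundary F v = (F.filter (M.InStar v)).card := by
  have hedge (e : E) : (delta (M.src e) + delta (M.tgt e)) v = if M.InStar v e then 1 else 0 := by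
    rw [Pi.add_apply, delta, delta, Pi.single_apply, Pi.single_apply]
    by_cases hs : M.src e = v <;> by_cases ht : M.tgt e = v <;>
      simp [InStar, hs, ht, eq_comm (a := v), CharTwo.add_self_eq_zero]
  rw [boundary, Finset.sum_apply, Finset.card_filter, Nat.cast_sum]
  exact Finset.sum_congr rfl fun e _ => by rw [hedge]; split_ifs <;> simp

theorem IsEven.even_card_star (h : M.IsEven F) (v : V) : Even (F.filter (M.InStar v)).card := by
  rw [← ZMod.natCast_eq_zero_iff_even, ← boundary_apply, h, Pi.zero_apply]

theorem Joins.exists_inStar (h : M.Joins F a b) (hab : a ≠ b) : ∃ e ∈ F, M.InStar a e := by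
  by_contra! hF
  have hodd := boundary_apply (M := M) (F := F) a
  rw [Finset.filter_false_of_mem hF, h] at hodd
  simp [hab] at hodd

theorem Link.joins_singleton (h : M.Link e a b) : M.Joins {e} a b := by
  rw [Joins, boundary, Finset.sum_singleton]
  rcases h with ⟨rfl, rfl⟩ | ⟨rfl, rfl⟩
  · rfl
  · exact add_comm _ _

section DecidableEdges

variable [DecidableEq E]

protected theorem Joins.union (h : M.Joins F a b) (h' : M.Joins F' b c) (hd : Disjoint F F') :
    M.Joins (F ∪ F') a c := by
  unfold Joins boundary at *
  rw [Finset.sum_union hd]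
  linear_combination h + h' + ZModModule.add_self (delta b)

protected theorem Joins.sdiff (h : M.Joins F a b) (h' : M.Joins F' a c) (hF : F' ⊆ F) :
    M.Joins (F \ F') c b := by
  unfold Joins boundary at *
  linear_combination Finset.sum_sdiff hF (f := fun e => delta (M.src e) + delta (M.tgt e))
    + h - h' - ZModModule.add_self (delta c)

protected theorem IsEven.sdiff (h : M.IsEven F) (h' : M.IsEven F') (hF : F' ⊆ F) :
    M.IsEven (F \ F') := by
  unfold IsEven boundary at *
  rwa [← Finset.sum_sdiff hF, h', add_zero] at h

theorem IsEven.symmDiff (h : M.IsEven F) (h' : M.IsEven F') : M.IsEven (symmDiff F F') := by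
  have hF := Finset.sum_inter_add_sum_sdiff F F' fun e => delta (M.src e) + delta (M.tgt e)
  have hF' := Finset.sum_inter_add_sum_sdiff F' F fun e => delta (M.src e) + delta (M.tgt e)
  unfold IsEven boundary at *
  rw [Finset.inter_comm F' F] at hF'
  rw [symmDiff_def, Finset.sup_eq_union, Finset.sum_union disjoint_sdiff_sdiff]
  linear_combination hF + hF' + h + h' -
    ZModModule.add_self (∑ e ∈ F ∩ F', (delta (M.src e) + delta (M.tgt e)))

protected theorem Joins.insert (h : M.Joins F a b) (he : M.Link e c a) (heF : e ∉ F) :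
    M.Joins (insert e F) c b := by
  rw [Finset.insert_eq]
  exact he.joins_singleton.union h (Finset.disjoint_singleton_left.2 heF)

protected theorem Joins.erase (h : M.Joins F a b) (he : M.Link e a c) (heF : e ∈ F) :
    M.Joins (F.erase e) c b := by
  rw [Finset.erase_eq]
  exact h.sdiff he.joins_singleton (Finset.singleton_subset_iff.2 heF)

end DecidableEdges

-- `R` is `P` followed from `x` until it first enters `W`, and `g` is its last edge.
theorem Joins.exists_first_entry {P : Finset E} {x y : V} {W : Set V} (h : M.Joins P x y)
    (hx : x ∉ W) (hy : y ∈ W) :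
    ∃ R ⊆ P, ∃ z ∈ W, M.Joins R x z ∧ ∃ g ∈ R, (∃ u ∉ W, M.Link g u z) ∧
      ∀ e ∈ R, e ≠ g → M.src e ∉ W ∧ M.tgt e ∉ W := by
  classical
  induction P using Finset.strongInduction generalizing x with
  | H P ih =>
    obtain ⟨e, heP, hstar⟩ := h.exists_inStar (ne_of_mem_of_not_mem hy hx).symm
    obtain ⟨x', -, hlink⟩ := hstar.exists_link
    by_cases hx' : x' ∈ W
    · refine ⟨{e}, Finset.singleton_subset_iff.2 heP, x', hx', hlink.joins_singleton, e,
        Finset.mem_singleton_self e, ⟨x, hx, hlink⟩, fun e' he' hne => ?_⟩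
      exact absurd (Finset.mem_singleton.1 he') hne
    · obtain ⟨R, hRP, z, hz, hR, g, hgR, hg, havoid⟩ :=
        ih _ (Finset.erase_ssubset heP) (h.erase hlink heP) hx'
      have heR : e ∉ R := fun heR => Finset.notMem_erase e P (hRP heR)
      refine ⟨insert e R, Finset.insert_subset heP (hRP.trans (Finset.erase_subset e P)), z, hz,
        hR.insert hlink heR, g, Finset.mem_insert_of_mem hgR, hg, fun e' he' hne => ?_⟩
      rcases Finset.mem_insert.1 he' with rfl | he'
      · rcases hlink with ⟨hs, ht⟩ | ⟨hs, ht⟩ <;> exact ⟨hs ▸ by assumption, ht ▸ by assumption⟩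
      · exact havoid e' he' hne

end Joins

/-! ### Conservative weightings -/

section Circuits

variable {V E : Type*} [DecidableEq V] (M : Multigraph V E)

/-- A circuit: a minimal nonempty even edge set. -/
def IsCircuit (Z : Finset E) : Prop := Minimal (fun F => F.Nonempty ∧ M.IsEven F) Z

variable {M} {Z Z' : Finset E} {b z : V} {e e₁ : E} {W : Set V}

theorem IsEven.exists_isCircuit_subset (h : M.IsEven Z) (hne : Z.Nonempty) :
    ∃ Z' ⊆ Z, M.IsCircuit Z' :=
  exists_minimal_le_of_wellFoundedLT _ Z ⟨hne, h⟩

theorem IsCircuit.isEven (h : M.IsCircuit Z) : M.IsEven Z := h.prop.2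

theorem IsCircuit.eq_of_subset (h : M.IsCircuit Z) (h' : M.IsEven Z') (hne : Z'.Nonempty)
    (hZ' : Z' ⊆ Z) : Z' = Z :=
  h.eq_of_le ⟨hne, h'⟩ hZ'

-- Follow the circuit from `b` along `e₁`: either `W` is hit, or the first return to `b` closes up
-- the whole circuit.
theorem IsCircuit.exists_joins_or_avoids (h : M.IsCircuit Z) (he₁ : e₁ ∈ Z) (hstar : M.InStar b e₁)
    (hb : b ∉ W) :
    (∃ z ∈ W, ∃ F ⊆ Z, M.Joins F b z) ∨
      (∀ e ∈ Z, M.src e ∉ W ∧ M.tgt e ∉ W) ∧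
        ∃ e₂ ≠ e₁, ∀ e, e ∈ Z ∧ M.InStar b e ↔ e = e₁ ∨ e = e₂ := by
  classical
  obtain ⟨c, hcb, hlink⟩ := hstar.exists_link
  by_cases hcW : c ∈ W
  · exact .inl ⟨c, hcW, {e₁}, Finset.singleton_subset_iff.2 he₁, hlink.joins_singleton⟩
  obtain ⟨R, hRZ, z, hz, hR, g, hgR, ⟨u, hu, hg⟩, havoid⟩ :=
    ((h.isEven.joins b).erase hlink he₁).exists_first_entry (W := insert b W)
      (by simp [hcb, hcW]) (Set.mem_insert b W)
  have he₁R : e₁ ∉ R := fun he => Finset.notMem_erase e₁ Z (hRZ he)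
  have hsub : insert e₁ R ⊆ Z := Finset.insert_subset he₁ (hRZ.trans (Finset.erase_subset e₁ Z))
  have hjoin : M.Joins (insert e₁ R) b z := hR.insert hlink he₁R
  rcases hz with rfl | hz
  swap
  · exact .inl ⟨z, hz, _, hsub, hjoin⟩
  have hZ : insert e₁ R = Z := h.eq_of_subset hjoin.isEven (Finset.insert_nonempty e₁ R) hsub
  simp only [Set.mem_insert_iff, not_or] at hu havoid
  refine .inr ⟨fun e he => ?_, g, ne_of_mem_of_not_mem hgR he₁R, fun e => ⟨fun ⟨he, hez⟩ => ?_, ?_⟩⟩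
  · rcases Finset.mem_insert.1 (hZ ▸ he) with rfl | heR
    · rcases hlink with ⟨hs, ht⟩ | ⟨hs, ht⟩ <;> simp [hs, ht, hb, hcW]
    · by_cases heg : e = g
      · subst heg
        rcases hg with ⟨hs, ht⟩ | ⟨hs, ht⟩ <;> simp [hs, ht, hb, hu.2]
      · exact ⟨(havoid e heR heg).1.2, (havoid e heR heg).2.2⟩
  · rcases Finset.mem_insert.1 (hZ ▸ he) with rfl | heR
    · exact .inl rfl
    · by_contra! heg
      have := havoid e heR heg.2
      exact hez (by simp [this])
  · rintro (rfl | rfl)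
    · exact ⟨he₁, hstar⟩
    · exact ⟨hsub (Finset.mem_insert_of_mem hgR), hg.symm.inStar hu.1⟩

theorem IsCircuit.exists_star_eq_pair (h : M.IsCircuit Z) (he₁ : e₁ ∈ Z) (hstar : M.InStar b e₁) :
    ∃ e₂ ≠ e₁, ∀ e, e ∈ Z ∧ M.InStar b e ↔ e = e₁ ∨ e = e₂ := by
  rcases h.exists_joins_or_avoids he₁ hstar (Set.notMem_empty b) with ⟨z, hz, -⟩ | ⟨-, hpair⟩
  · exact absurd hz (Set.notMem_empty z)
  · exact hpair

theorem IsCircuit.exists_joins (h : M.IsCircuit Z) (he₁ : e₁ ∈ Z) (hstar : M.InStar b e₁)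
    (he : e ∈ Z) (hz : M.src e = z ∨ M.tgt e = z) : ∃ F ⊆ Z, M.Joins F b z := by
  by_cases hbz : b = z
  · exact hbz ▸ ⟨∅, Finset.empty_subset Z, isEven_empty.joins b⟩
  rcases h.exists_joins_or_avoids he₁ hstar (W := {z}) hbz with ⟨_, rfl, hF⟩ | ⟨havoid, -⟩
  · exact hF
  · exact absurd hz (not_or.2 (havoid e he))

end Circuits

section Conservative

variable {V E : Type*} [DecidableEq V] (M : Multigraph V E)

/-- A signed edge weighting is conservative if no even edge set has negative weight. -/
def IsConservative (ω : E → ℤ) : Prop := ∀ Z : Finset E, M.IsEven Z → 0 ≤ ∑ e ∈ Z, ω e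

/-- A join of two distinct vertices of negative weight, the weight being least possible among all
joins of pairs of distinct vertices. -/
structure IsMinJoin (ω : E → ℤ) (P : Finset E) (a b : V) : Prop where
  ne : a ≠ b
  joins : M.Joins P a b
  neg : ∑ e ∈ P, ω e < 0
  weight_le : ∀ a' b' (Q : Finset E), a' ≠ b' → M.Joins Q a' b' → ∑ e ∈ P, ω e ≤ ∑ e ∈ Q, ω e

/-- A join of least weight that among these also has the least number of edges. -/
structure IsShortestMinJoin (ω : E → ℤ) (P : Finset E) (a b : V) : Prop
    extends M.IsMinJoin ω P a b where
  card_le : ∀ a' b' (Q : Finset E), a' ≠ b' → M.Joins Q a' b' →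
    ∑ e ∈ Q, ω e ≤ ∑ e ∈ P, ω e → P.card ≤ Q.card

variable {M} {ω : E → ℤ} {P Q Z F : Finset E} {a b y : V} {e e₁ : E}

theorem isConservative_of_isCircuit (h : ∀ Z, M.IsCircuit Z → 0 ≤ ∑ e ∈ Z, ω e) :
    M.IsConservative ω := by
  classical
  intro Z
  induction Z using Finset.strongInduction with
  | H Z ih =>
    intro hZ
    rcases Z.eq_empty_or_nonempty with rfl | hne
    · simp
    obtain ⟨Z', hZ'Z, hZ'⟩ := hZ.exists_isCircuit_subset hne
    rw [← Finset.sum_sdiff hZ'Z]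
    exact add_nonneg (ih _ (Finset.sdiff_ssubset hZ'Z hZ'.prop.1) (hZ.sdiff hZ'.isEven hZ'Z))
      (h Z' hZ')

theorem IsConservative.sum_le_of_subset (hω : M.IsConservative ω) (hP : M.Joins P a b)
    (hQ : M.Joins Q a b) (hQP : Q ⊆ P) : ∑ e ∈ Q, ω e ≤ ∑ e ∈ P, ω e := by
  classical
  rw [← Finset.sum_sdiff hQP]
  exact le_add_of_nonneg_left (hω _ (hP.sdiff hQ hQP).isEven)

-- The two sets `Q ∪ F` and `Q ∪ (Z \ F)` are even and have total weight twice that of `Q`.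
theorem IsConservative.sum_nonneg_of_joins (hω : M.IsConservative ω) (hZ : M.IsEven Z)
    (hZ0 : ∑ e ∈ Z, ω e = 0) (hFZ : F ⊆ Z) (hF : M.Joins F a b) (hQZ : Disjoint Q Z)
    (hQ : M.Joins Q a b) : 0 ≤ ∑ e ∈ Q, ω e := by
  classical
  have hd : Disjoint Q F := hQZ.mono_right hFZ
  have hd' : Disjoint Q (Z \ F) := hQZ.mono_right Finset.sdiff_subset
  have hnonneg := hω _ (hQ.union hF.symm hd).isEven
  have hnonneg' := hω _ (hQ.union ((hZ.joins a).sdiff hF hFZ) hd').isEven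
  rw [Finset.sum_union hd] at hnonneg
  rw [Finset.sum_union hd'] at hnonneg'
  linarith [Finset.sum_sdiff hFZ (f := ω)]

theorem exists_isShortestMinJoin [Finite E] (hab : a ≠ b) (hQ : M.Joins Q a b)
    (hneg : ∑ e ∈ Q, ω e < 0) : ∃ P a b, M.IsShortestMinJoin ω P a b := by
  obtain ⟨P, ⟨a', b', hne, hP⟩, hmin⟩ :=
    Set.exists_min_image {P : Finset E | ∃ a b, a ≠ b ∧ M.Joins P a b}
      (fun P => toLex (∑ e ∈ P, ω e, P.card)) (Set.toFinite _) ⟨Q, a, b, hab, hQ⟩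
  simp only [Prod.Lex.toLex_le_toLex'] at hmin
  refine ⟨P, a', b', ⟨hne, hP, (hmin Q ⟨a, b, hab, hQ⟩).1.trans_lt hneg,
    fun c d R hcd hR => (hmin R ⟨c, d, hcd, hR⟩).1⟩, fun c d R hcd hR hle => ?_⟩
  obtain ⟨hweight, hcard⟩ := hmin R ⟨c, d, hcd, hR⟩
  exact hcard (hweight.antisymm hle)

theorem IsMinJoin.weight_le_of_joins (h : M.IsMinJoin ω P a b) (hω : M.IsConservative ω)
    {a' b' : V} (hQ : M.Joins Q a' b') : ∑ e ∈ P, ω e ≤ ∑ e ∈ Q, ω e := by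
  rcases eq_or_ne a' b' with rfl | hne
  · exact h.neg.le.trans (hω Q hQ.isEven)
  · exact h.weight_le a' b' Q hne hQ

theorem IsMinJoin.mem_iff_neg (h : M.IsMinJoin ω P a b) (hω : M.IsConservative ω)
    (he : M.InStar b e) (hne : ω e ≠ 0) : e ∈ P ↔ ω e < 0 := by
  classical
  obtain ⟨c, -, hlink⟩ := he.exists_link
  constructor
  · intro heP
    have hle := h.weight_le_of_joins hω (h.joins.symm.erase hlink heP)
    rw [← Finset.add_sum_erase P ω heP] at hle
    lia
  · intro hneg
    by_contra heP
    have hle := h.weight_le_of_joins hω (h.joins.symm.insert hlink.symm heP)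
    rw [Finset.sum_insert heP] at hle
    lia

-- An even remainder of `P` could be dropped, so `P` is its own path up to the first visit of `b`.
theorem IsShortestMinJoin.exists_last_edge (h : M.IsShortestMinJoin ω P a b)
    (hω : M.IsConservative ω) :
    ∃ f ∈ P, M.InStar b f ∧ ∀ e ∈ P, e ≠ f → M.src e ≠ b ∧ M.tgt e ≠ b := by
  classical
  obtain ⟨R, hRP, z, rfl, hR, g, hgR, ⟨u, hu, hg⟩, havoid⟩ :=
    h.joins.exists_first_entry (W := {b}) h.ne rfl
  obtain rfl : R = P := Finset.eq_of_subset_of_card_le hRP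
    (h.card_le a z R h.ne hR (hω.sum_le_of_subset h.joins hR hRP))
  exact ⟨g, hgR, hg.symm.inStar hu, havoid⟩

theorem IsShortestMinJoin.weight_neg_of_subset (h : M.IsShortestMinJoin ω P a b)
    (hω : M.IsConservative ω) (hQP : Q ⊆ P) (hne : Q.Nonempty) (hQ : M.Joins Q b y) :
    ∑ e ∈ Q, ω e < 0 := by
  classical
  have hrest : M.Joins (P \ Q) y a := h.joins.symm.sdiff hQ hQP
  have hsum := Finset.sum_sdiff hQP (f := ω)
  rcases eq_or_ne y a with rfl | hya
  · linarith [hω _ hrest.isEven, h.neg]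
  · by_contra! hnonneg
    have hcard := h.card_le y a _ hya hrest (by linarith)
    exact absurd hcard (Finset.card_lt_card (Finset.sdiff_ssubset hQP hne)).not_ge

-- Otherwise follow `P` backwards from `b` until it first meets `a` or `Z`. Meeting `a` gives a
-- minimum join that contains `Z` and hence a positive edge at `b`; meeting `Z` gives a part of `P`
-- of negative weight that either half of `Z` closes up to an even set.
theorem IsShortestMinJoin.weight_circuit_ne_zero (h : M.IsShortestMinJoin ω P a b)
    (hω : M.IsConservative ω) (hne : ∀ e, M.InStar b e → ω e ≠ 0) (hZ : M.IsCircuit Z)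
    (he₁ : e₁ ∈ Z) (hstar : M.InStar b e₁) (hpos : ∀ e ∈ Z, M.InStar b e → 0 < ω e) :
    ∑ e ∈ Z, ω e ≠ 0 := by
  classical
  intro hZ0
  obtain ⟨f, hfP, hfb, hfP'⟩ := h.exists_last_edge hω
  have hfZ : f ∉ Z := fun hfZ =>
    ((h.mem_iff_neg hω hfb (hne f hfb)).1 hfP).not_gt (hpos f hfZ hfb)
  let T : Set V := {v | v = a ∨ v ≠ b ∧ ∃ e ∈ Z, M.src e = v ∨ M.tgt e = v}
  obtain ⟨R, hRP, z, hz, hR, g, hgR, ⟨u, hu, hg⟩, havoid⟩ :=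
    h.joins.symm.exists_first_entry (W := T) (by simp [T, h.ne.symm]) (.inl rfl)
  have hdisj : Disjoint R Z := by
    refine Finset.disjoint_left.2 fun e heR heZ => ?_
    obtain ⟨hs, ht⟩ := hfP' e (hRP heR) (ne_of_mem_of_not_mem heZ hfZ)
    have hsT : M.src e ∈ T := .inr ⟨hs, e, heZ, .inl rfl⟩
    have htT : M.tgt e ∈ T := .inr ⟨ht, e, heZ, .inr rfl⟩
    by_cases heg : e = g
    · subst heg
      rcases hg with ⟨rfl, -⟩ | ⟨-, rfl⟩ <;> exact hu (by assumption)
    · exact (havoid e heR heg).1 hsT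
  have hRneg : ∑ e ∈ R, ω e < 0 := h.weight_neg_of_subset hω hRP ⟨g, hgR⟩ hR
  rcases hz with rfl | ⟨-, e, heZ, hez⟩
  · have hRle := hω.sum_le_of_subset h.joins.symm hR hRP
    have hsum : ∑ e ∈ R ∪ Z, ω e = ∑ e ∈ R, ω e := by rw [Finset.sum_union hdisj, hZ0, add_zero]
    have hmin : M.IsMinJoin ω (R ∪ Z) z b :=
      ⟨h.ne, hR.symm.union (hZ.isEven.joins b) hdisj, hsum ▸ hRneg,
        fun c d Q hcd hQ => hsum ▸ hRle.trans (h.weight_le c d Q hcd hQ)⟩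
    exact ((hmin.mem_iff_neg hω hstar (hne e₁ hstar)).1 (Finset.mem_union_right R he₁)).not_gt
      (hpos e₁ he₁ hstar)
  · obtain ⟨F, hFZ, hF⟩ := hZ.exists_joins he₁ hstar heZ hez
    exact (hω.sum_nonneg_of_joins hZ.isEven hZ0 hFZ hF hdisj hR).not_gt hRneg

/-- The weighting obtained from `ω` by moving the weights of the star of `b` one step towards
zero. -/
def relax (M : Multigraph V E) (ω : E → ℤ) (b : V) (e : E) : ℤ :=
  if M.InStar b e then ω e - (ω e).sign else ω e

theorem sum_relax (Z : Finset E) (b : V) :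
    ∑ e ∈ Z, M.relax ω b e = ∑ e ∈ Z, ω e - ∑ e ∈ Z with M.InStar b e, (ω e).sign := by
  rw [Finset.sum_filter, ← Finset.sum_sub_distrib]
  refine Finset.sum_congr rfl fun e _ => ?_
  unfold relax
  split_ifs <;> simp

theorem IsShortestMinJoin.isConservative_relax (h : M.IsShortestMinJoin ω P a b)
    (hω : M.IsConservative ω) (hne : ∀ e, M.InStar b e → ω e ≠ 0)
    (hparity : ∀ Z, M.IsEven Z → Even (∑ e ∈ Z, ω e)) : M.IsConservative (M.relax ω b) := by
  classical
  refine isConservative_of_isCircuit fun Z hZ => ?_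
  have hnonneg := hω Z hZ.isEven
  rw [sum_relax]
  rcases (Z.filter (M.InStar b)).eq_empty_or_nonempty with hempty | ⟨e₁, he₁⟩
  · rwa [hempty, Finset.sum_empty, sub_zero]
  rw [Finset.mem_filter] at he₁
  obtain ⟨e₂, hne₂, hpair⟩ := hZ.exists_star_eq_pair he₁.1 he₁.2
  have hfilter : Z.filter (M.InStar b) = {e₁, e₂} := by ext e; simp [hpair]
  rw [hfilter, Finset.sum_pair hne₂.symm]
  have he₂ : M.InStar b e₂ := ((hpair e₂).2 (.inr rfl)).2
  by_cases hpos : 0 < ω e₁ ∧ 0 < ω e₂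
  · have hZ0 : ∑ e ∈ Z, ω e ≠ 0 := h.weight_circuit_ne_zero hω hne hZ he₁.1 he₁.2
      fun e heZ heb => by rcases (hpair e).1 ⟨heZ, heb⟩ with rfl | rfl <;> tauto
    obtain ⟨k, hk⟩ := hparity Z hZ.isEven
    rw [Int.sign_eq_one_of_pos hpos.1, Int.sign_eq_one_of_pos hpos.2]
    lia
  · have : (ω e₁).sign + (ω e₂).sign ≤ 0 := by
      rcases lt_or_gt_of_ne (hne e₁ he₁.2) with h₁ | h₁ <;>
        rcases lt_or_gt_of_ne (hne e₂ he₂) with h₂ | h₂ <;>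
        simp_all [Int.sign_eq_neg_one_of_neg, Int.sign_eq_one_of_pos]
    linarith

end Conservative

/-! ### Even edge sets of large weight -/

section Identification

variable {V E : Type*} [DecidableEq V] (M : Multigraph V E)

/-- The multigraph obtained by identifying the vertex `v` with `u`. -/
def identify (u v : V) : Multigraph V E where
  src e := Function.update id v u (M.src e)
  tgt e := Function.update id v u (M.tgt e)

variable {M} {F : Finset E} {u v : V} {e : E}

theorem delta_update_id (x : V) :
    delta (Function.update id v u x) = delta x + delta x v • (delta u + delta v) := by
  rcases eq_or_ne x v with rfl | hx
  · rw [Function.update_self, show delta x x = 1 from Pi.single_eq_same x 1, one_smul]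
    linear_combination -ZModModule.add_self (delta x)
  · rw [Function.update_of_ne hx, delta, delta, Pi.single_eq_of_ne' hx, zero_smul, add_zero, id]

theorem boundary_identify :
    (M.identify u v).boundary F = M.boundary F + M.boundary F v • (delta u + delta v) := by
  simp only [boundary, identify, delta_update_id, Finset.sum_apply, Finset.sum_smul,
    ← Finset.sum_add_distrib, Pi.add_apply, add_smul]
  exact Finset.sum_congr rfl fun e _ => by abel

theorem IsEven.identify (h : M.IsEven F) : (M.identify u v).IsEven F := by
  unfold IsEven at *
  rw [boundary_identify, h, Pi.zero_apply, zero_smul, add_zero]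

theorem IsEven.of_identify (h : (M.identify u v).IsEven F) : M.IsEven F ∨ M.Joins F u v := by
  unfold IsEven Joins at *
  rw [boundary_identify] at h
  rcases (by decide : ∀ c : ZMod 2, c = 0 ∨ c = 1) (M.boundary F v) with hv | hv
  · left
    rwa [hv, zero_smul, add_zero] at h
  · right
    rw [hv, one_smul] at h
    linear_combination h - ZModModule.add_self (delta u + delta v)

theorem IsEven.exists_lift (h : (M.identify u v).IsEven F) (he : M.Link e u v) {ω : E → ℤ}
    (hω : ω e = 0) : ∃ F', M.IsEven F' ∧ ∑ e ∈ F', ω e = ∑ e ∈ F, ω e := by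
  classical
  rcases h.of_identify with hF | hF
  · exact ⟨F, hF, rfl⟩
  by_cases heF : e ∈ F
  · exact ⟨F.erase e, (hF.erase he heF).isEven, Finset.sum_erase F hω⟩
  · exact ⟨insert e F, (hF.insert he.symm heF).isEven, Finset.sum_insert_zero hω⟩

theorem card_nonloops_identify_lt [Fintype E] (he : M.Link e u v) (huv : u ≠ v) :
    (Finset.univ.filter fun e => (M.identify u v).src e ≠ (M.identify u v).tgt e).card <
      (Finset.univ.filter fun e => M.src e ≠ M.tgt e).card := by
  refine Finset.card_lt_card (Finset.ssubset_iff_of_subset ?_ |>.2 ⟨e, ?_, ?_⟩)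
  · exact Finset.monotone_filter_right _ fun e _ => mt (congrArg (Function.update id v u))
  · rcases he with ⟨rfl, rfl⟩ | ⟨rfl, rfl⟩ <;> simp [huv, huv.symm]
  · rcases he with ⟨rfl, rfl⟩ | ⟨rfl, rfl⟩ <;>
      simp [identify, Function.update_apply]

end Identification

section EvenSubgraph

variable {V E : Type*} [DecidableEq V] (M : Multigraph V E)

/-- A multigraph is bridgeless if every edge lies in an even edge set. -/
def IsBridgeless : Prop := ∀ e, ∃ Z : Finset E, e ∈ Z ∧ M.IsEven Z

/-- The signed weighting `ω` certifies that `C` is an even set of greatest `|ω|`-weight: `ω` is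
`|ω|` on `C` and `-|ω|` off `C`, and exchanging any even set with `C` gains nothing. The parity
condition is what makes relaxation preserve this. -/
structure IsOptimalityCertificate (ω : E → ℤ) (C : Finset E) : Prop where
  isEven : M.IsEven C
  isConservative : M.IsConservative ω
  even_sum : ∀ Z : Finset E, M.IsEven Z → Even (∑ e ∈ Z, ω e)
  nonneg : ∀ e ∈ C, 0 ≤ ω e
  nonpos : ∀ e ∉ C, ω e ≤ 0

variable {M} {ω : E → ℤ} {C P : Finset E} {a b u v : V} {e : E}

theorem IsOptimalityCertificate.identify (h : M.IsOptimalityCertificate ω C) (he : M.Link e u v)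
    (hω : ω e = 0) : (M.identify u v).IsOptimalityCertificate ω C where
  isEven := h.isEven.identify
  isConservative Z hZ := by
    obtain ⟨Z', hZ', hsum⟩ := hZ.exists_lift he hω
    exact hsum ▸ h.isConservative Z' hZ'
  even_sum Z hZ := by
    obtain ⟨Z', hZ', hsum⟩ := hZ.exists_lift he hω
    exact hsum ▸ h.even_sum Z' hZ'
  nonneg := h.nonneg
  nonpos := h.nonpos

theorem even_sum_sign {S : Finset E} (hne : ∀ e ∈ S, ω e ≠ 0) (hS : Even S.card) :
    Even (∑ e ∈ S, (ω e).sign) := by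
  have hsum : Even (∑ e ∈ S, ((ω e).sign - 1)) := by
    refine even_iff_two_dvd.2 (Finset.dvd_sum fun e he => ?_)
    rcases lt_or_gt_of_ne (hne e he) with h | h
    · simp [Int.sign_eq_neg_one_of_neg h]
    · simp [Int.sign_eq_one_of_pos h]
  rw [Finset.sum_sub_distrib, Int.even_sub, Finset.sum_const, nsmul_one] at hsum
  exact hsum.2 (Int.even_coe_nat _ |>.2 hS)

theorem IsOptimalityCertificate.relax (h : M.IsOptimalityCertificate ω C)
    (hP : M.IsShortestMinJoin ω P a b) (hne : ∀ e, M.InStar b e → ω e ≠ 0) :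
    M.IsOptimalityCertificate (M.relax ω b) C where
  isEven := h.isEven
  isConservative := hP.isConservative_relax h.isConservative hne h.even_sum
  even_sum Z hZ := by
    rw [sum_relax]
    exact (h.even_sum Z hZ).sub (even_sum_sign
      (fun e he => hne e (Finset.mem_filter.1 he).2) (hZ.even_card_star b))
  nonneg e he := by grind [Multigraph.relax, h.nonneg e he]
  nonpos e he := by grind [Multigraph.relax, h.nonpos e he]

theorem IsBridgeless.exists_ne_inStar (hM : M.IsBridgeless) (he : M.InStar b e) :
    ∃ e' ≠ e, M.InStar b e' := by
  obtain ⟨Z, heZ, hZ⟩ := hM e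
  by_contra! huniq
  have hstar : Z.filter (M.InStar b) = {e} := by
    ext e'
    rw [Finset.mem_filter, Finset.mem_singleton]
    exact ⟨fun h' => by_contra fun hne => huniq e' hne h'.2, fun h' => h' ▸ ⟨heZ, he⟩⟩
  simpa [hstar] using hZ.even_card_star b

-- The star of `b` has exactly one edge off `C`, hence at least two in `C`, by evenness and
-- bridgelessness. Relaxation therefore does not increase the right-hand side.
theorem IsOptimalityCertificate.relax_sum_le [Fintype E] [DecidableEq E]
    (h : M.IsOptimalityCertificate ω C) (hM : M.IsBridgeless)
    (hP : M.IsShortestMinJoin ω P a b) (hne : ∀ e, M.InStar b e → ω e ≠ 0) :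
    ∑ e ∈ C, M.relax ω b e + 2 * ∑ e ∈ Cᶜ, M.relax ω b e ≤
      ∑ e ∈ C, ω e + 2 * ∑ e ∈ Cᶜ, ω e := by
  have hmem (e) (he : M.InStar b e) : e ∈ P ↔ e ∉ C := by
    rw [hP.mem_iff_neg h.isConservative he (hne e he)]
    exact ⟨fun hneg heC => hneg.not_ge (h.nonneg e heC),
      fun heC => lt_of_le_of_ne (h.nonpos e heC) (hne e he)⟩
  obtain ⟨f, hfP, hfb, hfP'⟩ := hP.exists_last_edge h.isConservative
  have huniq (e) (he : M.InStar b e) (heC : e ∉ C) : e = f := by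
    by_contra hef
    exact he (by simp [hfP' e ((hmem e he).2 heC) hef])
  have hsignC : ∑ e ∈ C with M.InStar b e, (ω e).sign = (C.filter (M.InStar b)).card := by
    rw [Finset.card_eq_sum_ones, Nat.cast_sum]
    refine Finset.sum_congr rfl fun e he => ?_
    obtain ⟨heC, heb⟩ := Finset.mem_filter.1 he
    exact Int.sign_eq_one_of_pos (lt_of_le_of_ne (h.nonneg e heC) (hne e heb).symm)
  have hstar : Cᶜ.filter (M.InStar b) = {f} := by
    ext e
    rw [Finset.mem_filter, Finset.mem_compl, Finset.mem_singleton]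
    exact ⟨fun he => huniq e he.2 he.1, fun he => he ▸ ⟨(hmem f hfb).1 hfP, hfb⟩⟩
  have hsignf : (ω f).sign = -1 := Int.sign_eq_neg_one_of_neg
    ((hP.mem_iff_neg h.isConservative hfb (hne f hfb)).1 hfP)
  have hcard : 2 ≤ (C.filter (M.InStar b)).card := by
    obtain ⟨e, hef, heb⟩ := hM.exists_ne_inStar hfb
    have hpos : 0 < (C.filter (M.InStar b)).card := Finset.card_pos.2
      ⟨e, Finset.mem_filter.2 ⟨by_contra fun heC => hef (huniq e heb heC), heb⟩⟩
    obtain ⟨k, hk⟩ := h.isEven.even_card_star b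
    lia
  rw [sum_relax, sum_relax, hsignC, hstar, Finset.sum_singleton, hsignf]
  lia

theorem IsOptimalityCertificate.exists_isShortestMinJoin [Finite E]
    (h : M.IsOptimalityCertificate ω C) (he : ω e < 0) : ∃ P a b, M.IsShortestMinJoin ω P a b := by
  have hjoin : M.Joins {e} (M.src e) (M.tgt e) := Link.joins_singleton (.inl ⟨rfl, rfl⟩)
  have hweight : ∑ e ∈ {e}, ω e < 0 := by rwa [Finset.sum_singleton]
  refine Multigraph.exists_isShortestMinJoin (fun hloop => ?_) hjoin hweight
  exact hweight.not_ge (h.isConservative _ (hloop ▸ hjoin).isEven)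

theorem sum_natAbs_relax_lt [Fintype E] (he : M.InStar b e) (hne : ω e ≠ 0) :
    ∑ e, (M.relax ω b e).natAbs < ∑ e, (ω e).natAbs := by
  refine Finset.sum_lt_sum (fun e _ => ?_) ⟨e, Finset.mem_univ e, ?_⟩
  · grind [Multigraph.relax]
  · grind [Multigraph.relax]

-- Edges of weight zero are contracted; when there are none, the star at an end of a shortest
-- minimum join is relaxed.
theorem IsOptimalityCertificate.sum_nonneg [Fintype E] [DecidableEq E]
    (h : M.IsOptimalityCertificate ω C) (hM : M.IsBridgeless) :
    0 ≤ ∑ e ∈ C, ω e + 2 * ∑ e ∈ Cᶜ, ω e := by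
  induction hn : ∑ e, (ω e).natAbs + (Finset.univ.filter fun e => M.src e ≠ M.tgt e).card
    using Nat.strong_induction_on generalizing M ω with
  | _ n ih =>
    by_cases hzero : ∃ e, M.src e ≠ M.tgt e ∧ ω e = 0
    · obtain ⟨e, hne, hω⟩ := hzero
      have he : M.Link e (M.src e) (M.tgt e) := .inl ⟨rfl, rfl⟩
      have hlt := card_nonloops_identify_lt he hne
      exact ih _ (hn ▸ Nat.add_lt_add_left hlt _) (h.identify he hω)
        (fun e => (hM e).imp fun Z hZ => ⟨hZ.1, hZ.2.identify⟩) rfl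
    push Not at hzero
    by_cases hneg : ∃ e, ω e < 0
    · obtain ⟨e, he⟩ := hneg
      obtain ⟨P, a, b, hP⟩ := h.exists_isShortestMinJoin he
      have hne (e) (he : M.InStar b e) : ω e ≠ 0 := hzero e he.src_ne_tgt
      obtain ⟨f, -, hf, -⟩ := hP.exists_last_edge h.isConservative
      have hlt := sum_natAbs_relax_lt hf (hne f hf)
      exact (ih _ (hn ▸ Nat.add_lt_add_right hlt _) (h.relax hP hne) hM rfl).trans
        (h.relax_sum_le hM hP hne)
    · push Not at hneg
      exact add_nonneg (Finset.sum_nonneg fun e _ => hneg e)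
        (mul_nonneg zero_le_two (Finset.sum_nonneg fun e _ => hneg e))

theorem sum_ite_mem_eq_sum_sub_sum_symmDiff [DecidableEq E] (w : E → ℤ) (C Z : Finset E) :
    ∑ e ∈ Z, (if e ∈ C then w e else -w e) = ∑ e ∈ C, w e - ∑ e ∈ symmDiff C Z, w e := by
  rw [Finset.sum_ite, Finset.filter_mem_eq_inter, Finset.filter_notMem_eq_sdiff, symmDiff_def,
    Finset.sup_eq_union, Finset.sum_union disjoint_sdiff_sdiff, Finset.sum_neg_distrib,
    ← Finset.sum_inter_add_sum_sdiff C Z w, Finset.inter_comm]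
  ring

-- The weights are doubled to make the sums over even sets even.
theorem exists_isOptimalityCertificate [Finite E] [DecidableEq E] (M : Multigraph V E)
    (w : E → ℕ) : ∃ C : Finset E,
      M.IsOptimalityCertificate (fun e => if e ∈ C then 2 * (w e : ℤ) else -(2 * w e)) C := by
  obtain ⟨C, hC, hmax⟩ := Set.exists_max_image {C : Finset E | M.IsEven C}
    (fun C => ∑ e ∈ C, w e) (Set.toFinite _) ⟨∅, isEven_empty⟩
  refine ⟨C, hC, fun Z hZ => ?_, fun Z _ => ?_, fun e he => ?_, fun e he => ?_⟩
  · have hle := hmax _ (hC.symmDiff hZ)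
    zify at hle
    rw [sum_ite_mem_eq_sum_sub_sum_symmDiff, ← Finset.mul_sum, ← Finset.mul_sum]
    linarith
  · refine even_iff_two_dvd.2 (Finset.dvd_sum fun e _ => ?_)
    split_ifs <;> simp
  · simp [he]
  · simp [he]

theorem IsBridgeless.exists_isEven_sum_ge [Fintype E] (hM : M.IsBridgeless) (w : E → ℕ) :
    ∃ C : Finset E, M.IsEven C ∧ 2 * ∑ e, w e ≤ 3 * ∑ e ∈ C, w e := by
  classical
  obtain ⟨C, hC⟩ := exists_isOptimalityCertificate M w
  have hnonneg := hC.sum_nonneg hM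
  refine ⟨C, hC.isEven, ?_⟩
  rw [Finset.sum_congr rfl fun e he => if_pos he,
    Finset.sum_congr (s₁ := Cᶜ) rfl fun e he => if_neg (Finset.mem_compl.1 he),
    Finset.sum_neg_distrib, ← Finset.mul_sum, ← Finset.mul_sum] at hnonneg
  rw [← Finset.sum_add_sum_compl C]
  zify
  linarith

end EvenSubgraph

/-! ### Euler tours -/

section EulerTour

variable {V E : Type*} (M : Multigraph V E) {G : SimpleGraph V}

/-- A multigraph is connected if no proper nonempty vertex set is left by no edge. -/
def IsConnected : Prop :=
  ∀ K : Set V, K.Nonempty → (∀ e, M.src e ∈ K ↔ M.tgt e ∈ K) → K = Set.univ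

/-- The properties of a walk that uses each edge of `P` exactly once on which Euler's theorem
depends; they are, unlike the order of the edges, insensitive to rotating a closed walk. -/
structure Traverses [DecidableEq V] {a b : V} (w : G.Walk a b) (P : Finset E) : Prop where
  joins : M.Joins P a b
  length_eq : w.length = P.card
  mem_support : ∀ e ∈ P, M.src e ∈ w.support ∧ M.tgt e ∈ w.support

variable {M} {P : Finset E} {a b c : V} {e : E}

theorem Link.adj (h : M.Link e a b) (hadj : G.Adj (M.src e) (M.tgt e)) : G.Adj a b := by
  rcases h with ⟨rfl, rfl⟩ | ⟨rfl, rfl⟩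
  · exact hadj
  · exact hadj.symm

variable [DecidableEq V]

theorem Traverses.cons [DecidableEq E] {w : G.Walk a b} (h : M.Traverses w P) (hadj : G.Adj c a)
    (he : M.Link e c a) (heP : e ∉ P) : M.Traverses (.cons hadj w) (insert e P) where
  joins := h.joins.insert he heP
  length_eq := by rw [Walk.length_cons, h.length_eq, Finset.card_insert_of_notMem heP]
  mem_support e' he' := by
    rw [Walk.support_cons]
    rcases Finset.mem_insert.1 he' with rfl | he'
    · rcases he with ⟨hs, ht⟩ | ⟨hs, ht⟩ <;> simp [hs, ht]
    · exact (h.mem_support e' he').imp (List.mem_cons_of_mem c) (List.mem_cons_of_mem c)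

theorem Traverses.rotate {w : G.Walk a a} (h : M.Traverses w P) (hc : c ∈ w.support) :
    M.Traverses (w.rotate c hc) P where
  joins := h.joins.isEven.joins c
  length_eq := by rw [Walk.length_rotate, h.length_eq]
  mem_support e he := by simpa only [Walk.mem_support_rotate_iff] using h.mem_support e he

-- A longest trail is closed by parity, and it visits every vertex because otherwise it could be
-- rotated and extended.
theorem IsConnected.exists_closed_walk [Fintype E] [Nonempty V] (hconn : M.IsConnected)
    (heven : M.IsEven Finset.univ) (hadj : ∀ e, G.Adj (M.src e) (M.tgt e)) :
    ∃ (v : V) (w : G.Walk v v), (∀ u, u ∈ w.support) ∧ w.length ≤ Fintype.card E := by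
  classical
  obtain ⟨v⟩ := ‹Nonempty V›
  obtain ⟨P, ⟨a, b, w, hw⟩, hmax⟩ := Set.exists_max_image
    {P : Finset E | ∃ (a b : V) (w : G.Walk a b), M.Traverses w P} Finset.card (Set.toFinite _)
    ⟨∅, v, v, .nil, isEven_empty.joins v, rfl, by simp⟩
  have hfinal {a' b' c : V} {w : G.Walk a' b'} (hw : M.Traverses w P) {e : E}
      (he : M.Link e c a') : e ∈ P := by
    by_contra heP
    have hle := hmax _ ⟨c, b', _, hw.cons (he.adj (hadj e)) he heP⟩
    rw [Finset.card_insert_of_notMem heP] at hle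
    lia
  obtain rfl : a = b := by
    by_contra hab
    obtain ⟨e, he, hstar⟩ :=
      ((heven.joins b).sdiff hw.joins.symm (Finset.subset_univ P)).exists_inStar hab
    obtain ⟨c, -, hlink⟩ := hstar.exists_link
    exact (Finset.mem_sdiff.1 he).2 (hfinal hw hlink.symm)
  have hclosed (e) (c d) (he : M.Link e c d) (hc : c ∈ w.support) : d ∈ w.support := by
    have heP : e ∈ P := hfinal (hw.rotate hc) he.symm
    rcases he with ⟨rfl, rfl⟩ | ⟨rfl, rfl⟩
    · exact (hw.mem_support e heP).2
    · exact (hw.mem_support e heP).1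
  have hall : {u | u ∈ w.support} = Set.univ := hconn _ ⟨a, w.start_mem_support⟩ fun e =>
    ⟨hclosed e _ _ (.inl ⟨rfl, rfl⟩), hclosed e _ _ (.inr ⟨rfl, rfl⟩)⟩
  exact ⟨a, w, Set.eq_univ_iff_forall.1 hall, hw.length_eq.trans_le (Finset.card_le_univ P)⟩

end EulerTour

end Multigraph

/-! ### Normal spanning trees -/

/-- A rooted spanning tree of a graph, presented by its parent function (with the root as its own
parent) and the distances to the root in the tree. -/
structure RootedSpanningTree {V : Type*} (G : SimpleGraph V) where
  root : V
  parent : V → V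
  depth : V → ℕ
  parent_root : parent root = root
  depth_root : depth root = 0
  adj_parent : ∀ v ≠ root, G.Adj v (parent v)
  depth_eq : ∀ v ≠ root, depth v = depth (parent v) + 1

namespace RootedSpanningTree

section Ancestors

variable {V : Type*} {G : SimpleGraph V} (T : RootedSpanningTree G)

/-- The ancestor relation of a rooted tree; every vertex is an ancestor of itself. -/
def IsAncestor (a v : V) : Prop := ∃ k, T.parent^[k] v = a

/-- A normal, or depth-first search, tree: adjacent vertices are comparable. -/
def IsNormal : Prop := ∀ u v, G.Adj u v → T.IsAncestor u v ∨ T.IsAncestor v u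

variable {T} {a b c u v : V}

theorem ne_root_of_depth_pos (hv : 0 < T.depth v) : v ≠ T.root := by
  rintro rfl
  exact hv.ne' T.depth_root

@[elab_as_elim]
theorem induction_on {P : V → Prop} (v : V) (root : P T.root)
    (step : ∀ v ≠ T.root, P (T.parent v) → P v) : P v := by
  induction hn : T.depth v generalizing v with
  | zero =>
    by_cases hv : v = T.root
    · exact hv ▸ root
    · have := T.depth_eq v hv
      lia
  | succ n ih =>
    have hv : v ≠ T.root := ne_root_of_depth_pos (by lia)
    have := T.depth_eq v hv
    exact step v hv (ih _ (by lia))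

namespace IsAncestor

theorem refl (v : V) : T.IsAncestor v v := ⟨0, rfl⟩

theorem trans (h : T.IsAncestor a b) (h' : T.IsAncestor b c) : T.IsAncestor a c := by
  obtain ⟨k, rfl⟩ := h
  obtain ⟨l, rfl⟩ := h'
  exact ⟨k + l, Function.iterate_add_apply ..⟩

end IsAncestor

theorem isAncestor_parent (v : V) : T.IsAncestor (T.parent v) v := ⟨1, rfl⟩

theorem isAncestor_iff_eq_or_parent : T.IsAncestor a v ↔ a = v ∨ T.IsAncestor a (T.parent v) := by
  constructor
  · rintro ⟨_ | k, rfl⟩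
    · exact .inl rfl
    · exact .inr ⟨k, rfl⟩
  · rintro (rfl | h)
    · exact .refl a
    · exact h.trans (isAncestor_parent v)

theorem isAncestor_root_iff : T.IsAncestor a T.root ↔ a = T.root := by
  refine ⟨?_, fun h => h ▸ .refl a⟩
  rintro ⟨k, rfl⟩
  exact Function.iterate_fixed T.parent_root k

theorem root_isAncestor (v : V) : T.IsAncestor T.root v :=
  T.induction_on v (.refl _) fun v _ h => h.trans (isAncestor_parent v)

namespace IsAncestor

theorem to_parent (h : T.IsAncestor a v) (hne : a ≠ v) : T.IsAncestor a (T.parent v) :=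
  (isAncestor_iff_eq_or_parent.1 h).resolve_left hne

theorem depth_le (h : T.IsAncestor a v) : T.depth a ≤ T.depth v := by
  induction v using T.induction_on with
  | root => rw [isAncestor_root_iff.1 h]
  | step v hv ih =>
    rcases isAncestor_iff_eq_or_parent.1 h with rfl | h
    · rfl
    · have := ih h
      have := T.depth_eq v hv
      lia

theorem depth_lt (h : T.IsAncestor a v) (hne : a ≠ v) : T.depth a < T.depth v := by
  have hv : v ≠ T.root := fun hv => hne (by subst hv; exact isAncestor_root_iff.1 h)
  have := (h.to_parent hne).depth_le
  have := T.depth_eq v hv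
  lia

theorem eq_of_depth_le (h : T.IsAncestor a v) (hd : T.depth v ≤ T.depth a) : a = v := by
  by_contra hne
  exact hd.not_gt (h.depth_lt hne)

theorem antisymm (h : T.IsAncestor a v) (h' : T.IsAncestor v a) : a = v :=
  h.eq_of_depth_le h'.depth_le

theorem of_depth_le (ha : T.IsAncestor a v) (hb : T.IsAncestor b v) (h : T.depth a ≤ T.depth b) :
    T.IsAncestor a b := by
  induction v using T.induction_on with
  | root => rwa [isAncestor_root_iff.1 hb]
  | step v _ ih =>
    by_cases hbv : b = v
    · rwa [hbv]
    by_cases hav : a = v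
    · exact absurd (hb.eq_of_depth_le (hav ▸ h)) hbv
    · exact ih (ha.to_parent hav) (hb.to_parent hbv)

theorem exists_child (h : T.IsAncestor a v) (hne : a ≠ v) :
    ∃ c ≠ T.root, T.parent c = a ∧ T.IsAncestor c v := by
  induction v using T.induction_on with
  | root => exact absurd (isAncestor_root_iff.1 h) hne
  | step v hv ih =>
    by_cases hav : a = T.parent v
    · exact ⟨v, hv, hav.symm, .refl v⟩
    · obtain ⟨c, hc, hca, hcv⟩ := ih (h.to_parent hne) hav
      exact ⟨c, hc, hca, hcv.trans (isAncestor_parent v)⟩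

end IsAncestor

theorem not_isAncestor_parent (hv : v ≠ T.root) : ¬T.IsAncestor v (T.parent v) := fun h => by
  have := h.depth_le
  have := T.depth_eq v hv
  lia

theorem eq_of_parent_eq (hb : b ≠ T.root) (hc : c ≠ T.root) (h : T.parent b = T.parent c)
    (hbv : T.IsAncestor b v) (hcv : T.IsAncestor c v) : b = c := by
  have hd : T.depth b = T.depth c := by rw [T.depth_eq b hb, T.depth_eq c hc, h]
  exact (hbv.of_depth_le hcv hd.le).eq_of_depth_le hd.ge

theorem exists_depth_eq {j : ℕ} (hj : j ≤ T.depth v) : ∃ x, T.depth x = j := by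
  induction v using T.induction_on with
  | root => exact ⟨T.root, by rw [T.depth_root] at hj ⊢; lia⟩
  | step v hv ih =>
    by_cases hjv : j = T.depth v
    · exact ⟨v, hjv.symm⟩
    · exact ih (by have := T.depth_eq v hv; lia)

theorem depth_lt_card [Fintype V] (v : V) : T.depth v < Fintype.card V := by
  choose x hx using fun j : Fin (T.depth v + 1) => T.exists_depth_eq (Nat.le_of_lt_succ j.2)
  have hinj : Function.Injective x := fun i j hij => Fin.ext (by rw [← hx i, ← hx j, hij])
  simpa using Fintype.card_le_of_injective x hinj

end Ancestors

section NormalTree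

variable {V : Type*} {G : SimpleGraph V}

theorem nonempty_of_connected (hG : G.Connected) : Nonempty (RootedSpanningTree G) := by
  classical
  obtain ⟨r⟩ := hG.nonempty
  have hpred (v : V) (hv : v ≠ r) : ∃ u, G.Adj v u ∧ G.dist v r = G.dist u r + 1 := by
    obtain ⟨_ | ⟨hadj, q⟩, hw⟩ := hG.exists_walk_length_eq_dist v r
    · exact absurd rfl hv
    rename_i u
    obtain ⟨q', hq'⟩ := hG.exists_walk_length_eq_dist u r
    have hle := G.dist_le q
    have hle' := G.dist_le (Walk.cons hadj q')
    rw [Walk.length_cons] at hw hle'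
    exact ⟨u, hadj, by lia⟩
  choose! p hadj hdist using hpred
  exact ⟨{
    root := r
    parent := Function.update p r r
    depth v := G.dist v r
    parent_root := Function.update_self ..
    depth_root := G.dist_self
    adj_parent v hv := by rw [Function.update_of_ne hv]; exact hadj v hv
    depth_eq v hv := by rw [Function.update_of_ne hv]; exact hdist v hv }⟩

open Classical in
/-- The tree obtained by making `u` the parent of `v`, where `v` is not an ancestor of `u`. -/
noncomputable def reattach (T : RootedSpanningTree G) {u v : V} (huv : G.Adj v u)
    (hvu : ¬T.IsAncestor v u) : RootedSpanningTree G where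
  root := T.root
  parent := Function.update T.parent v u
  depth x := if T.IsAncestor v x then T.depth x - T.depth v + (T.depth u + 1) else T.depth x
  parent_root := by
    have hv : T.root ≠ v := fun hv => hvu (hv ▸ root_isAncestor u)
    rw [Function.update_of_ne hv, T.parent_root]
  depth_root := by
    have hv : ¬T.IsAncestor v T.root := fun hv =>
      hvu (isAncestor_root_iff.1 hv ▸ root_isAncestor u)
    rw [if_neg hv, T.depth_root]
  adj_parent x hx := by
    by_cases hxv : x = v
    · rwa [hxv, Function.update_self]
    · rw [Function.update_of_ne hxv]
      exact T.adj_parent x hx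
  depth_eq x hx := by
    by_cases hxv : x = v
    · subst hxv
      rw [Function.update_self, if_pos (.refl x), if_neg hvu]
      lia
    · have := T.depth_eq x hx
      rw [Function.update_of_ne hxv]
      by_cases hvx : T.IsAncestor v x
      · have := hvx.depth_lt (Ne.symm hxv)
        rw [if_pos hvx, if_pos (hvx.to_parent (Ne.symm hxv))]
        lia
      · rwa [if_neg hvx, if_neg fun h => hvx (h.trans (isAncestor_parent x))]

-- A spanning tree of maximal total depth is normal: of two adjacent incomparable vertices the
-- shallower one could be reattached below the other.
theorem exists_isNormal [Finite V] (hG : G.Connected) : ∃ T : RootedSpanningTree G, T.IsNormal := by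
  have := Fintype.ofFinite V
  have := nonempty_of_connected hG
  let slack (T : RootedSpanningTree G) : ℕ := ∑ v, (Fintype.card V - T.depth v)
  let T := Function.argmin slack
  have key (u v : V) (huv : G.Adj u v) (hd : T.depth v ≤ T.depth u) : T.IsAncestor v u := by
    by_contra hvu
    refine (Function.argmin_le slack (T.reattach huv.symm hvu)).not_gt
      (Finset.sum_lt_sum (fun x _ => ?_) ⟨v, Finset.mem_univ v, ?_⟩)
    · simp only [reattach]
      split_ifs <;> lia
    · have := T.depth_lt_card v
      simp only [reattach, if_pos (IsAncestor.refl v)]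
      lia
  refine ⟨T, fun u v huv => ?_⟩
  rcases le_total (T.depth v) (T.depth u) with h | h
  · exact .inr (key u v huv h)
  · exact .inl (key v u huv.symm h)

end NormalTree

end RootedSpanningTree

/-! ### Blocks and back edges -/

section Biconnected

variable {V : Type*} {G : SimpleGraph V} {A B : Set V}

/-- A biconnected vertex set: one inducing a connected subgraph without a cut vertex. The blocks
are the maximal biconnected sets. -/
structure IsBiconnected (G : SimpleGraph V) (A : Set V) : Prop where
  connected : (G.induce A).Connected
  preconnected_sdiff : ∀ v ∈ A, (G.induce (A \ {v})).Preconnected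

theorem IsBiconnected.preconnected_sdiff_singleton (h : IsBiconnected G A) (v : V) :
    (G.induce (A \ {v})).Preconnected := by
  by_cases hv : v ∈ A
  · exact h.preconnected_sdiff v hv
  · rw [Set.sdiff_singleton_eq_self hv]
    exact h.connected.preconnected

theorem IsBiconnected.union (hA : IsBiconnected G A) (hB : IsBiconnected G B)
    (h : (A ∩ B).Nontrivial) : IsBiconnected G (A ∪ B) where
  connected := induce_union_connected hA.connected.preconnected hB.connected.preconnected h.nonempty
  preconnected_sdiff v _ := by
    obtain ⟨u, hu, huv⟩ := h.exists_ne v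
    rw [Set.union_sdiff_distrib]
    exact (induce_union_connected (hA.preconnected_sdiff_singleton v)
      (hB.preconnected_sdiff_singleton v) ⟨u, ⟨hu.1, huv⟩, hu.2, huv⟩).preconnected

theorem IsBlock.isBiconnected (h : IsBlock G B) : IsBiconnected G B := ⟨h.1, h.2.1⟩

theorem IsBiconnected.exists_isBlock_superset [Finite V] (hA : IsBiconnected G A) :
    ∃ B, IsBlock G B ∧ A ⊆ B := by
  obtain ⟨B, hAB, hB⟩ := (Set.toFinite {B : Set V | IsBiconnected G B}).exists_le_maximal hA
  exact ⟨B, ⟨hB.prop.connected, hB.prop.preconnected_sdiff,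
    fun B' hBB' h h' => (hB.eq_of_le ⟨h, h'⟩ hBB').symm⟩, hAB⟩

theorem IsBlock.superset_of_nontrivial_inter (hB : IsBlock G B) (hA : IsBiconnected G A)
    (h : (B ∩ A).Nontrivial) : A ⊆ B := by
  have hBA := hB.isBiconnected.union hA h
  rw [← hB.2.2 _ Set.subset_union_left hBA.connected hBA.preconnected_sdiff]
  exact Set.subset_union_right

end Biconnected

namespace RootedSpanningTree

section Blocks

variable {V : Type*} {G : SimpleGraph V} (T : RootedSpanningTree G)

/-- The vertices on the tree path from `v` up to its ancestor `a`. -/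
def chain (a v : V) : Set V := {y | T.IsAncestor a y ∧ T.IsAncestor y v}

/-- A back edge of a normal tree, namely the edge from `b.1` up to the parent of `b.2`, where `b.2`
is a proper ancestor of `b.1`. The child `b.2` encodes the upper end together with the direction in
which the back edge leaves it downwards. -/
structure IsBackEdge (b : V × V) : Prop where
  ne_root : b.2 ≠ T.root
  isAncestor : T.IsAncestor b.2 b.1
  ne : b.2 ≠ b.1
  adj : G.Adj b.1 (T.parent b.2)

/-- The tree edge from `c` to its parent lies on the tree path between `b.1` and `b.2`. The
remaining tree edge of the cycle closed by the back edge `b`, at its top, does not count. -/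
structure Covers (b : V × V) (c : V) : Prop where
  isAncestor_left : T.IsAncestor b.2 c
  ne : b.2 ≠ c
  isAncestor_right : T.IsAncestor c b.1

/-- The tree edge from `c` to its parent is covered by some back edge. -/
def IsCovered (c : V) : Prop := ∃ b, T.IsBackEdge b ∧ T.Covers b c

variable {T} {a c u v x : V} {b : V × V} {B : Set V}

theorem IsAncestor.left_mem_chain (h : T.IsAncestor a v) : a ∈ T.chain a v := ⟨.refl a, h⟩

theorem IsAncestor.right_mem_chain (h : T.IsAncestor a v) : v ∈ T.chain a v := ⟨h, .refl v⟩

theorem IsAncestor.connected_chain (h : T.IsAncestor a v) :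
    (G.induce (T.chain a v)).Connected := by
  induction v using T.induction_on with
  | root =>
    refine induce_connected_of_patches a h.left_mem_chain fun {y} hy => ?_
    obtain rfl : y = a := by rw [isAncestor_root_iff.1 hy.2, isAncestor_root_iff.1 h]
    exact ⟨T.chain y T.root, subset_rfl, hy, hy, .rfl⟩
  | step v hv ih =>
    by_cases hav : a = v
    · refine induce_connected_of_patches a h.left_mem_chain fun {y} hy => ?_
      obtain rfl : a = y := hy.1.antisymm (hav ▸ hy.2)
      exact ⟨T.chain a v, subset_rfl, hy, hy, .rfl⟩
    · have h' := h.to_parent hav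
      have hchain : T.chain a v = T.chain a (T.parent v) ∪ {v} := by
        ext y
        simp only [chain, Set.mem_ofPred_eq, Set.union_singleton, Set.mem_insert_iff,
          isAncestor_iff_eq_or_parent (v := v)]
        constructor
        · tauto
        · rintro (rfl | hy)
          · exact ⟨h, .inl rfl⟩
          · exact ⟨hy.1, .inr hy.2⟩
      rw [hchain]
      exact connected_induce_union (ih h').preconnected .of_subsingleton h'.right_mem_chain rfl
        (T.adj_parent v hv).symm

-- Deleting `w` leaves `x` connected to the part below `w` along the chain, and to the part above
-- `w` through the edge from `x` to `a`.
theorem IsAncestor.isBiconnected_chain (h : T.IsAncestor a x) (hadj : G.Adj a x) :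
    IsBiconnected G (T.chain a x) where
  connected := h.connected_chain
  preconnected_sdiff w hw := by
    suffices h' : (G.induce (T.chain a x \ {w})).Connected from h'.preconnected
    by_cases hwx : w = x
    · subst hwx
      refine induce_connected_of_patches a ⟨h.left_mem_chain, hadj.ne⟩ fun {v} hv =>
        ⟨T.chain a v, fun y hy => ⟨⟨hy.1, hy.2.trans hv.1.2⟩, ?_⟩, hv.1.1.left_mem_chain,
          hv.1.1.right_mem_chain, hv.1.1.connected_chain _ _⟩
      rintro rfl
      exact hv.2 (hv.1.2.antisymm hy.2)
    refine induce_connected_of_patches x ⟨h.right_mem_chain, Ne.symm hwx⟩ fun {v} hv => ?_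
    by_cases hwv : T.IsAncestor w v
    · refine ⟨T.chain v x, fun y hy => ⟨⟨hv.1.1.trans hy.1, hy.2⟩, ?_⟩, hv.1.2.right_mem_chain,
        hv.1.2.left_mem_chain, hv.1.2.connected_chain _ _⟩
      rintro rfl
      exact hv.2 (hy.1.antisymm hwv)
    · refine ⟨T.chain a v ∪ {x}, ?_, .inr rfl, .inl hv.1.1.right_mem_chain,
        connected_induce_union hv.1.1.connected_chain.preconnected .of_subsingleton
          hv.1.1.left_mem_chain (Set.mem_singleton x) hadj _ _⟩
      rintro y (hy | rfl)
      · refine ⟨⟨hy.1, hy.2.trans hv.1.2⟩, ?_⟩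
        rintro rfl
        exact hwv hy.2
      · exact ⟨h.right_mem_chain, Ne.symm hwx⟩

theorem IsBackEdge.parent_isAncestor (hb : T.IsBackEdge b) : T.IsAncestor (T.parent b.2) b.1 :=
  (isAncestor_parent b.2).trans hb.isAncestor

theorem IsBackEdge.isBiconnected_chain (hb : T.IsBackEdge b) :
    IsBiconnected G (T.chain (T.parent b.2) b.1) :=
  hb.parent_isAncestor.isBiconnected_chain hb.adj.symm

theorem exists_isBlock_of_ne_root [Finite V] (hc : c ≠ T.root) :
    ∃ B, IsBlock G B ∧ c ∈ B ∧ T.parent c ∈ B := by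
  have h := isAncestor_parent (T := T) c
  obtain ⟨B, hB, hsub⟩ :=
    (h.isBiconnected_chain (T.adj_parent c hc).symm).exists_isBlock_superset
  exact ⟨B, hB, hsub h.right_mem_chain, hsub h.left_mem_chain⟩

theorem Covers.isAncestor_parent (h : T.Covers b c) : T.IsAncestor b.2 (T.parent c) :=
  h.isAncestor_left.to_parent h.ne

theorem IsCovered.parent_ne_root (h : T.IsCovered c) : T.parent c ≠ T.root := by
  obtain ⟨b, hb, hbc⟩ := h
  exact fun hp => hb.ne_root (isAncestor_root_iff.1 (hp ▸ hbc.isAncestor_parent))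

theorem IsCovered.ne_root (h : T.IsCovered c) : c ≠ T.root := by
  rintro rfl
  exact h.parent_ne_root T.parent_root

-- The block minus `T.parent c` is connected, and an edge leaving the subtree of `c` towards
-- another vertex than `T.parent c` would be a back edge covering `c`.
theorem IsNormal.eq_parent_or_isAncestor (hT : T.IsNormal) (hc : c ≠ T.root)
    (hcov : ¬T.IsCovered c) (hB : IsBlock G B) (hcB : c ∈ B) (hpB : T.parent c ∈ B) (hu : u ∈ B) :
    u = T.parent c ∨ T.IsAncestor c u := by
  by_contra! hcu
  obtain ⟨w⟩ := hB.2.1 _ hpB ⟨c, hcB, (T.adj_parent c hc).ne⟩ ⟨u, hu, hcu.1⟩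
  obtain ⟨⟨⟨⟨y, hy⟩, ⟨z, hz⟩⟩, hyz⟩, -, hcy, hcz⟩ :=
    w.exists_boundary_dart {y | T.IsAncestor c y.1} (.refl c) hcu.2
  replace hyz : G.Adj y z := hyz
  replace hcy : T.IsAncestor c y := hcy
  replace hcz : ¬T.IsAncestor c z := hcz
  have hzy : T.IsAncestor z y := (hT y z hyz).resolve_left fun h => hcz (hcy.trans h)
  have hzc : T.IsAncestor z c :=
    hzy.of_depth_le hcy (le_of_not_ge fun hd => hcz (hcy.of_depth_le hzy hd))
  have hzp : T.IsAncestor z (T.parent c) := hzc.to_parent (by rintro rfl; exact hcz (.refl z))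
  obtain ⟨c₀, hc₀, rfl, hc₀p⟩ := hzp.exists_child hz.2
  have hne {v : V} (hv : T.IsAncestor c v) : c₀ ≠ v := by
    rintro rfl
    exact not_isAncestor_parent hc (hv.trans hc₀p)
  have hc₀c : T.IsAncestor c₀ c := hc₀p.trans (T.isAncestor_parent c)
  exact hcov ⟨(y, c₀), ⟨hc₀, hc₀c.trans hcy, hne hcy, hyz⟩, hc₀c, hne (.refl c), hcy⟩

theorem IsNormal.ncard_uncovered_le [Finite V] (hT : T.IsNormal) :
    {c | c ≠ T.root ∧ ¬T.IsCovered c}.ncard ≤ {B : Set V | IsBlock G B}.ncard := by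
  choose! f hf hcf hpf using fun c => exists_isBlock_of_ne_root (T := T) (c := c)
  refine Set.ncard_le_ncard_of_injOn f (fun c hc => hf c hc.1) ?_ (Set.toFinite _)
  rintro c ⟨hc, hcov⟩ c' ⟨hc', hcov'⟩ hff
  have hbelow {u : V} (hu : u ∈ f c) : u = T.parent c ∨ T.IsAncestor c u :=
    hT.eq_parent_or_isAncestor hc hcov (hf c hc) (hcf c hc) (hpf c hc) hu
  have hbelow' {u : V} (hu : u ∈ f c) : u = T.parent c' ∨ T.IsAncestor c' u :=
    hT.eq_parent_or_isAncestor hc' hcov' (hf c' hc') (hcf c' hc') (hpf c' hc') (hff ▸ hu)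
  have hparent : T.parent c = T.parent c' := by
    rcases hbelow' (hpf c hc) with h | h
    · exact h
    rcases hbelow (hff ▸ hpf c' hc') with h' | h'
    · exact h'.symm
    exact absurd (h.trans ((isAncestor_parent c).trans h')) (not_isAncestor_parent hc')
  have hcc' : T.IsAncestor c c' := (hbelow (hff ▸ hcf c' hc')).resolve_left fun h =>
    (T.adj_parent c' hc').ne (h.trans hparent)
  exact eq_of_parent_eq hc hc' hparent hcc' (.refl c')

end Blocks

end RootedSpanningTree

/-! ### Minimum covers by back edges -/

theorem card_filter_snd_eq_ncard {α β : Type*} (S : Finset (α × β)) (b : β)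
    [DecidablePred fun p : α × β => p.2 = b] :
    (S.filter (·.2 = b)).card = {a | (a, b) ∈ S}.ncard := by
  rw [← Set.ncard_coe_finset,
    ← Set.ncard_image_of_injective {a | (a, b) ∈ S} (Prod.mk_left_injective b)]
  congr
  ext ⟨a, b'⟩
  simp only [Finset.coe_filter, Set.mem_ofPred_eq, Set.mem_image, Prod.mk.injEq]
  constructor
  · rintro ⟨h, rfl⟩
    exact ⟨a, h, rfl, rfl⟩
  · rintro ⟨_, h, rfl, rfl⟩
    exact ⟨h, rfl⟩

section LocalStructure

variable {V : Type*} {G : SimpleGraph V} {B : Set V}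

/-- A common weakening of being subcubic and of being claw-free: inside `B`, no vertex has three
pairwise nonadjacent neighbours and at least one further neighbour. -/
def IsLocallyNarrow (G : SimpleGraph V) (B : Set V) : Prop :=
  ∀ v ∈ B, ∀ I ⊂ {u | u ∈ B ∧ G.Adj v u}, G.IsIndepSet I → I.ncard ≤ 2

theorem isLocallyNarrow_of_ncard_le_three [Finite V]
    (h : ∀ v ∈ B, {u | u ∈ B ∧ G.Adj v u}.ncard ≤ 3) : IsLocallyNarrow G B := fun v hv _ hI _ =>
  Nat.le_of_lt_succ ((Set.ncard_lt_ncard hI).trans_le (h v hv))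

theorem nonempty_star_embedding {α β : Type*} [Subsingleton α] {v : V} (f : β ↪ V)
    (hadj : ∀ i, G.Adj v (f i)) (hindep : ∀ i j, ¬G.Adj (f i) (f j)) :
    Nonempty (completeBipartiteGraph α β ↪g G) := by
  refine ⟨⟨⟨Sum.elim (fun _ => v) f, ?_⟩, ?_⟩⟩
  · rintro (i | i) (j | j) hij
    · rw [Subsingleton.elim i j]
    · exact absurd hij (hadj j).ne
    · exact absurd hij (hadj i).ne'
    · rw [f.injective hij]
  · rintro (i | i) (j | j)
    · exact iff_of_false G.irrefl (by simp)
    · exact iff_of_true (hadj j) (by simp)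
    · exact iff_of_true (hadj i).symm (by simp)
    · exact iff_of_false (hindep i j) (by simp)

theorem isLocallyNarrow_of_isEmpty_claw_embedding
    (h : IsEmpty (completeBipartiteGraph (Fin 1) (Fin 3) ↪g (G.induce B))) :
    IsLocallyNarrow G B := by
  intro v hv I hI hindep
  by_contra! hcard
  have : Fintype I := (Set.finite_of_ncard_pos (by lia)).fintype
  obtain ⟨f⟩ : Nonempty (Fin 3 ↪ I) := Function.Embedding.nonempty_of_card_le (by
    rwa [Fintype.card_fin, ← Nat.card_eq_fintype_card])
  have hIB (i : Fin 3) : (f i : V) ∈ B ∧ G.Adj v (f i) := hI.subset (f i).2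
  refine (not_nonempty_iff.2 h) (nonempty_star_embedding (v := ⟨v, hv⟩)
    ⟨fun i => ⟨f i, (hIB i).1⟩, fun i j hij => f.injective (Subtype.ext (Subtype.mk.inj hij))⟩
    (fun i => (hIB i).2) fun i j hij => ?_)
  exact hindep (f i).2 (f j).2 (Adj.ne hij) hij

end LocalStructure

namespace RootedSpanningTree

section MinimumCovers

variable {V : Type*} {G : SimpleGraph V} (T : RootedSpanningTree G)

/-- A set of back edges that covers every tree edge covered by some back edge. -/
structure IsCover (S : Finset (V × V)) : Prop where
  isBackEdge : ∀ b ∈ S, T.IsBackEdge b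
  exists_covers : ∀ c, T.IsCovered c → ∃ b ∈ S, T.Covers b c

/-- A cover of minimal total depth: few back edges, with upper ends as high as possible. -/
def IsMinCover (S : Finset (V × V)) : Prop :=
  MinimalFor T.IsCover (fun S => ∑ b ∈ S, T.depth b.2) S

variable {T} {S : Finset (V × V)} {b b' : V × V} {B : Set V} {c x y : V}

theorem exists_isMinCover [Finite V] (T : RootedSpanningTree G) : ∃ S, T.IsMinCover S := by
  classical
  have := Fintype.ofFinite V
  refine exists_minimalFor_of_wellFoundedLT T.IsCover _
    ⟨Finset.univ.filter T.IsBackEdge, fun b hb => (Finset.mem_filter.1 hb).2, ?_⟩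
  rintro c ⟨b, hb, hbc⟩
  exact ⟨b, Finset.mem_filter.2 ⟨Finset.mem_univ b, hb⟩, hbc⟩

theorem IsMinCover.exists_covers_not_covers [DecidableEq V] (hS : T.IsMinCover S) (hbS : b ∈ S)
    (hb' : T.IsBackEdge b') (h : b' ∈ S.erase b ∨ T.depth b'.2 < T.depth b.2) :
    ∃ c, T.Covers b c ∧ ¬T.Covers b' c := by
  by_contra! hsub
  have hcover : T.IsCover (insert b' (S.erase b)) := by
    refine ⟨fun a ha => ?_, fun c hc => ?_⟩
    · rcases Finset.mem_insert.1 ha with rfl | ha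
      · exact hb'
      · exact hS.prop.isBackEdge a (Finset.mem_of_mem_erase ha)
    · obtain ⟨a, ha, hac⟩ := hS.prop.exists_covers c hc
      by_cases hab : a = b
      · exact ⟨b', Finset.mem_insert_self _ _, hsub c (hab ▸ hac)⟩
      · exact ⟨a, Finset.mem_insert_of_mem (Finset.mem_erase.2 ⟨hab, ha⟩), hac⟩
  have hle := not_lt.1 (hS.not_lt hcover)
  have hsum := Finset.sum_erase_add S (fun b => T.depth b.2) hbS
  have := T.depth_eq b.2 (hS.prop.isBackEdge b hbS).ne_root
  by_cases hmem : b' ∈ S.erase b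
  · rw [Finset.insert_eq_of_mem hmem] at hle
    lia
  · rw [Finset.sum_insert hmem] at hle
    have := h.resolve_left hmem
    lia

theorem IsMinCover.not_adj (hS : T.IsMinCover S) (hT : T.IsNormal) (hx : (x, c) ∈ S)
    (hy : (y, c) ∈ S) : ¬G.Adj x y := by
  classical
  intro hadj
  wlog hxy : T.IsAncestor x y generalizing x y
  · exact this hy hx hadj.symm ((hT x y hadj).resolve_left hxy)
  have hmem : (y, c) ∈ S.erase (x, c) := Finset.mem_erase.2 ⟨by simp [hadj.ne'], hy⟩
  obtain ⟨c', hcov, hncov⟩ :=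
    hS.exists_covers_not_covers hx (hS.prop.isBackEdge _ hy) (.inl hmem)
  exact hncov ⟨hcov.isAncestor_left, hcov.ne, hcov.isAncestor_right.trans hxy⟩

theorem IsMinCover.not_adj_parent_parent (hS : T.IsMinCover S) (hx : (x, c) ∈ S)
    (hp : T.parent c ≠ T.root) : ¬G.Adj x (T.parent (T.parent c)) := by
  classical
  intro hadj
  have hb := hS.prop.isBackEdge _ hx
  have hbelow {v : V} (hv : T.IsAncestor c v) : T.IsAncestor (T.parent c) v ∧ T.parent c ≠ v := by
    refine ⟨(isAncestor_parent c).trans hv, ?_⟩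
    rintro rfl
    exact not_isAncestor_parent hb.ne_root hv
  have hx' := hbelow hb.isAncestor
  have hlt : T.depth (T.parent c) < T.depth c := by
    rw [T.depth_eq c hb.ne_root]
    exact Nat.lt_succ_self _
  obtain ⟨c', hcov, hncov⟩ := hS.exists_covers_not_covers hx
    (b' := (x, T.parent c)) ⟨hp, hx'.1, hx'.2, hadj⟩ (.inr hlt)
  have hc' := hbelow hcov.isAncestor_left
  exact hncov ⟨hc'.1, hc'.2, hcov.isAncestor_right⟩

theorem IsBackEdge.chain_subset (hb : T.IsBackEdge b) (hB : IsBlock G B) (hc : c ≠ T.root)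
    (hcB : c ∈ B) (hpB : T.parent c ∈ B) (hbc : T.IsAncestor b.2 c) (hcb : T.IsAncestor c b.1) :
    T.chain (T.parent b.2) b.1 ⊆ B := by
  have hpc : T.IsAncestor (T.parent b.2) (T.parent c) := by
    by_cases h : b.2 = c
    · rw [h]
      exact .refl _
    · exact (isAncestor_parent b.2).trans (hbc.to_parent h)
  exact hB.superset_of_nontrivial_inter hb.isBiconnected_chain
    ⟨c, ⟨hcB, (isAncestor_parent b.2).trans hbc, hcb⟩, T.parent c,
      ⟨hpB, hpc, (isAncestor_parent c).trans hcb⟩, (T.adj_parent c hc).ne⟩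

theorem IsCovered.parent_parent_mem (hcov : T.IsCovered c) (hB : IsBlock G B) (hcB : c ∈ B)
    (hpB : T.parent c ∈ B) : T.parent (T.parent c) ∈ B := by
  obtain ⟨b, hb, hbc⟩ := hcov
  refine hb.chain_subset hB (IsCovered.ne_root ⟨b, hb, hbc⟩) hcB hpB hbc.isAncestor_left
    hbc.isAncestor_right ⟨?_, ?_⟩
  · by_cases h : b.2 = T.parent c
    · rw [h]
      exact .refl _
    · exact (isAncestor_parent b.2).trans (hbc.isAncestor_parent.to_parent h)
  · exact (isAncestor_parent _).trans ((isAncestor_parent c).trans hbc.isAncestor_right)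

-- The lower ends of the back edges over `c`, together with the grandparent of `c` if `c` is
-- covered, are independent neighbours of `T.parent c`, and `c` is a further neighbour.
theorem IsMinCover.card_filter_add_le [Finite V] [DecidableEq V] [DecidablePred T.IsCovered]
    (hS : T.IsMinCover S) (hT : T.IsNormal) (hG : ∀ B, IsBlock G B → IsLocallyNarrow G B)
    (hc : c ≠ T.root) :
    (S.filter (·.2 = c)).card + (if T.IsCovered c then 1 else 0) ≤ 2 := by
  obtain ⟨B, hB, hcB, hpB⟩ := exists_isBlock_of_ne_root hc
  have hnarrow (I : Set V) (hI : ∀ u ∈ I, u ∈ B ∧ G.Adj (T.parent c) u) (hcI : c ∉ I)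
      (hindep : G.IsIndepSet I) : I.ncard ≤ 2 :=
    hG B hB _ hpB I ⟨hI, fun hsub => hcI (hsub ⟨hcB, (T.adj_parent c hc).symm⟩)⟩ hindep
  let tails : Set V := {x | (x, c) ∈ S}
  have htails (x) (hx : x ∈ tails) : x ∈ B ∧ G.Adj (T.parent c) x := by
    have hb := hS.prop.isBackEdge _ hx
    exact ⟨hb.chain_subset hB hc hcB hpB (.refl c) hb.isAncestor
      hb.parent_isAncestor.right_mem_chain, hb.adj.symm⟩
  have hctails : c ∉ tails := fun hcc => (hS.prop.isBackEdge _ hcc).ne rfl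
  have hindep : G.IsIndepSet tails := fun x hx y hy _ => hS.not_adj hT hx hy
  rw [card_filter_snd_eq_ncard]
  split_ifs with hcov
  · have hp := hcov.parent_ne_root
    have hpadj := T.adj_parent _ hp
    have hpp : T.parent (T.parent c) ∉ tails := fun h => not_isAncestor_parent hp
      ((isAncestor_parent c).trans (hS.prop.isBackEdge _ h).isAncestor)
    rw [← Set.ncard_insert_of_notMem hpp (Set.toFinite _)]
    refine hnarrow _ ?_ ?_ (hindep.insert ?_)
    · rintro u (rfl | hu)
      · exact ⟨hcov.parent_parent_mem hB hcB hpB, hpadj⟩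
      · exact htails u hu
    · rintro (h | h)
      · have hcp := T.isAncestor_parent (T.parent c)
        rw [← h] at hcp
        exact not_isAncestor_parent hc hcp
      · exact hctails h
    · intro x hx _
      exact ⟨fun h => hS.not_adj_parent_parent hx hp h.symm, hS.not_adj_parent_parent hx hp⟩
  · exact hnarrow tails htails hctails hindep

end MinimumCovers

end RootedSpanningTree

/-! ### The tour -/

namespace RootedSpanningTree

open Multigraph

section LoweredGraph

variable {V : Type*} {G : SimpleGraph V} (T : RootedSpanningTree G)

/-- The multigraph of all covered tree edges and of the back edges in `S`, with the upper end of
each back edge `b` lowered from the parent of `b.2` to `b.2` itself. -/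
def loweredGraph (S : Finset (V × V)) : Multigraph V ({c // T.IsCovered c} ⊕ S) where
  src := Sum.elim (fun c => c) fun b => b.1.1
  tgt := Sum.elim (fun c => T.parent c) fun b => b.1.2

variable [DecidableEq V]

/-- The boundary of the tree edge from `c` to its parent. -/
abbrev edgeBoundary (c : V) : V → ZMod 2 := delta c + delta (T.parent c)

variable {T} {S : Finset (V × V)} {b : V × V} {c x : V}

theorem boundary_loweredGraph (C : Finset ({c // T.IsCovered c} ⊕ S)) :
    (T.loweredGraph S).boundary C =
      ∑ c ∈ C.toLeft, T.edgeBoundary c + ∑ b ∈ C.toRight, (delta b.1.1 + delta b.1.2) := by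
  conv_lhs => rw [← C.toLeft_disjSum_toRight, boundary, Finset.sum_disjSum]
  rfl

open Classical in
theorem sum_edgeBoundary_covers [Fintype V] (h : T.IsAncestor c x) :
    ∑ c' with T.Covers (x, c) c', T.edgeBoundary c' = delta x + delta c := by
  have hself : ∑ c' with T.Covers (c, c) c', T.edgeBoundary c' = delta c + delta c := by
    rw [Finset.filter_false_of_mem fun c' _ h' =>
      h'.ne (h'.isAncestor_left.antisymm h'.isAncestor_right), Finset.sum_empty,
      ZModModule.add_self]
  induction x using T.induction_on with
  | root =>
    obtain rfl := isAncestor_root_iff.1 h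
    exact hself
  | step x hx ih =>
    rcases eq_or_ne c x with rfl | hcx
    · exact hself
    have hx' : ¬T.Covers (T.parent x, c) x := fun h' =>
      not_isAncestor_parent hx h'.isAncestor_right
    have hinsert : Finset.univ.filter (T.Covers (x, c)) =
        insert x (Finset.univ.filter (T.Covers (T.parent x, c))) := by
      ext c'
      simp only [Finset.mem_insert, Finset.mem_filter_univ]
      constructor
      · intro h'
        refine or_iff_not_imp_left.2 fun hne => ?_
        exact ⟨h'.isAncestor_left, h'.ne, h'.isAncestor_right.to_parent hne⟩
      · rintro (rfl | h')
        · exact ⟨h, hcx, .refl _⟩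
        · exact ⟨h'.isAncestor_left, h'.ne, h'.isAncestor_right.trans (isAncestor_parent x)⟩
    rw [hinsert, Finset.sum_insert (by simpa using hx'), ih (h.to_parent hcx), edgeBoundary]
    linear_combination ZModModule.add_self (delta (T.parent x))

theorem IsCover.isBridgeless_loweredGraph [Finite V] (hS : T.IsCover S) :
    (T.loweredGraph S).IsBridgeless := by
  classical
  have := Fintype.ofFinite V
  have hcycle (b : S) : ∃ Z, (T.loweredGraph S).IsEven Z ∧ .inr b ∈ Z ∧
      ∀ c : {c // T.IsCovered c}, T.Covers b c → .inl c ∈ Z := by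
    have hb := hS.isBackEdge b b.2
    refine ⟨((Finset.univ.filter (T.Covers b)).subtype T.IsCovered).disjSum {b}, ?_, by simp,
      fun c hc => by simpa using hc⟩
    rw [IsEven, boundary_loweredGraph, Finset.toLeft_disjSum, Finset.toRight_disjSum,
      Finset.sum_subtype_of_mem _ fun c hc => ⟨b, hb, (Finset.mem_filter.1 hc).2⟩,
      sum_edgeBoundary_covers hb.isAncestor, Finset.sum_singleton, ZModModule.add_self]
  rintro (c | b)
  · obtain ⟨b, hb, hbc⟩ := hS.exists_covers c c.2
    obtain ⟨Z, hZ, -, hmem⟩ := hcycle ⟨b, hb⟩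
    exact ⟨Z, hmem c hbc, hZ⟩
  · obtain ⟨Z, hZ, hmem, -⟩ := hcycle b
    exact ⟨Z, hmem, hZ⟩

theorem IsCover.exists_sum_edgeBoundary_eq_zero [Finite V] (hS : T.IsCover S) :
    ∃ X : Finset V, ∃ R ⊆ S, (∀ c ∈ X, T.IsCovered c) ∧
      2 * {c | T.IsCovered c}.ncard ≤ 3 * X.card ∧
      ∑ c ∈ X, T.edgeBoundary c + ∑ b ∈ R, (delta b.1 + delta b.2) = 0 := by
  classical
  have := Fintype.ofFinite V
  obtain ⟨C, hC, hcard⟩ :=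
    hS.isBridgeless_loweredGraph.exists_isEven_sum_ge (Sum.elim (fun _ => 1) fun _ => 0)
  refine ⟨C.toLeft.map (.subtype _), C.toRight.map (.subtype _), Finset.map_subtype_subset _,
    fun c => Finset.property_of_mem_map_subtype _, ?_, ?_⟩
  · rw [← C.toLeft_disjSum_toRight, Finset.sum_disjSum, Fintype.sum_sum_type] at hcard
    rw [Finset.card_map, ← Nat.card_coe_set_eq, Nat.card_eq_fintype_card]
    simpa [Fintype.card_subtype] using hcard
  · rw [Finset.sum_map, Finset.sum_map]
    exact (boundary_loweredGraph C).symm.trans hC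

end LoweredGraph

section Tour

variable {V : Type*} [DecidableEq V] {G : SimpleGraph V} (T : RootedSpanningTree G)
  (X : Finset V) (R : Finset (V × V))

/-- How many of the two traversals of the tree edge from `c` to its parent are saved: one if `c`
is in `X`, and one for each back edge in `R` that leads from below `c` to the parent of `c`. -/
def savings (c : V) : ℕ := (R.filter (·.2 = c)).card + if c ∈ X then 1 else 0

/-- The number of remaining traversals of the tree edge from `c` to its parent. -/
def traversals (c : V) : ℕ := if c = T.root then 0 else 2 - savings X R c

/-- The multigraph of the back edges in `R` and of all remaining traversals of tree edges. -/
def tourGraph : Multigraph V ((Σ c, Fin (T.traversals X R c)) ⊕ R) where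
  src := Sum.elim (fun e => e.1) fun b => b.1.1
  tgt := Sum.elim (fun e => T.parent e.1) fun b => T.parent b.1.2

theorem sum_savings_nsmul [Fintype V] {M : Type*} [AddCommMonoid M] (f : V → M) :
    ∑ c, savings X R c • f c = ∑ b ∈ R, f b.2 + ∑ c ∈ X, f c := by
  simp only [savings, add_smul, Finset.sum_add_distrib, ite_smul, one_smul, zero_smul,
    Finset.sum_ite_mem, Finset.univ_inter]
  rw [← Finset.sum_fiberwise' R Prod.snd]
  simp only [Finset.sum_const]

/-- The sets `X` of covered tree edges and `R` of back edges save at most two traversals of every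
tree edge. -/
structure IsSaving : Prop where
  isCovered : ∀ c ∈ X, T.IsCovered c
  isBackEdge : ∀ b ∈ R, T.IsBackEdge b
  savings_le : ∀ c ≠ T.root, savings X R c ≤ 2

namespace IsSaving

variable {T X R}

theorem traversals_add_savings (h : T.IsSaving X R) (c : V) :
    T.traversals X R c + savings X R c = if c = T.root then 0 else 2 := by
  by_cases hc : c = T.root
  · rw [traversals, if_pos hc, if_pos hc, savings, if_neg fun hX => (h.isCovered c hX).ne_root hc,
      Finset.filter_false_of_mem fun b hb hbc => (h.isBackEdge b hb).ne_root (hbc.trans hc)]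
    rfl
  · rw [traversals, if_neg hc, if_neg hc, Nat.sub_add_cancel (h.savings_le c hc)]

theorem exists_mem_of_traversals_eq_zero (h : T.IsSaving X R) {c : V} (hc : c ≠ T.root)
    (h0 : T.traversals X R c = 0) : ∃ x, (x, c) ∈ R := by
  have htwo := h.traversals_add_savings c
  rw [if_neg hc, h0, savings] at htwo
  obtain ⟨b, hb⟩ : (R.filter (·.2 = c)).Nonempty := by
    rw [← Finset.card_pos]
    split_ifs at htwo <;> lia
  obtain ⟨hbR, rfl⟩ := Finset.mem_filter.1 hb
  exact ⟨b.1, hbR⟩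

theorem card_edges [Fintype V] (h : T.IsSaving X R) :
    Fintype.card ((Σ c, Fin (T.traversals X R c)) ⊕ R) + X.card + 2 = 2 * Fintype.card V := by
  have hsum : ∑ c, (T.traversals X R c + savings X R c) + 2 = 2 * Fintype.card V := by
    simp only [h.traversals_add_savings]
    rw [← Finset.add_sum_erase _ _ (Finset.mem_univ T.root), if_pos rfl,
      Finset.sum_congr rfl fun c hc => if_neg (Finset.ne_of_mem_erase hc), Finset.sum_const,
      Finset.card_erase_of_mem (Finset.mem_univ _), Finset.card_univ, smul_eq_mul]
    have := Fintype.card_pos_iff.2 ⟨T.root⟩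
    lia
  have hsavings := sum_savings_nsmul X R fun _ => 1
  simp only [smul_eq_mul, mul_one, ← Finset.card_eq_sum_ones] at hsavings
  rw [Finset.sum_add_distrib, hsavings] at hsum
  simp only [Fintype.card_sum, Fintype.card_sigma, Fintype.card_fin, Fintype.card_coe]
  lia

theorem isEven_tourGraph [Fintype V] (h : T.IsSaving X R)
    (hXR : ∑ c ∈ X, T.edgeBoundary c + ∑ b ∈ R, (delta b.1 + delta b.2) = 0) :
    (T.tourGraph X R).IsEven Finset.univ := by
  have hboundary : (T.tourGraph X R).boundary Finset.univ =
      ∑ c, T.traversals X R c • T.edgeBoundary c +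
        ∑ b ∈ R, (delta b.1 + delta (T.parent b.2)) := by
    rw [boundary, Fintype.sum_sum_type, Fintype.sum_sigma, ← Finset.sum_coe_sort R]
    simp [tourGraph]
  have hdouble : ∑ c, (T.traversals X R c + savings X R c) • T.edgeBoundary c = 0 :=
    Finset.sum_eq_zero fun c _ => by
      rw [h.traversals_add_savings]
      split_ifs
      · exact zero_smul _ _
      · rw [two_nsmul, ZModModule.add_self]
  simp only [add_smul, Finset.sum_add_distrib, sum_savings_nsmul] at hdouble
  simp only [Finset.sum_add_distrib] at hXR hboundary hdouble
  rw [IsEven, hboundary]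
  linear_combination hdouble - hXR + ZModModule.add_self (∑ b ∈ R, delta b.1)

theorem isConnected_tourGraph [Finite V] (h : T.IsSaving X R) :
    (T.tourGraph X R).IsConnected := by
  rintro K ⟨v₀, hv₀⟩ hK
  suffices hparent : ∀ c ≠ T.root, c ∈ K ↔ T.parent c ∈ K by
    have hroot (v : V) : v ∈ K ↔ T.root ∈ K := by
      induction v using T.induction_on with
      | root => rfl
      | step v hv ih => exact (hparent v hv).trans ih
    exact Set.eq_univ_of_forall fun v => (hroot v).2 ((hroot v₀).1 hv₀)
  by_contra hbad
  obtain ⟨c, ⟨hc, hcK⟩, hmax⟩ := Set.exists_max_image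
    {c | c ≠ T.root ∧ ¬(c ∈ K ↔ T.parent c ∈ K)} T.depth (Set.toFinite _)
    (by simpa [Set.Nonempty] using hbad)
  have hbelow (x) (hx : T.IsAncestor c x) : x ∈ K ↔ c ∈ K := by
    induction x using T.induction_on with
    | root => rw [isAncestor_root_iff.1 hx]
    | step x hxr ih =>
      rcases eq_or_ne c x with rfl | hcx
      · rfl
      refine Iff.trans ?_ (ih (hx.to_parent hcx))
      by_contra hxK
      exact (hmax x ⟨hxr, hxK⟩).not_gt (hx.depth_lt hcx)
  rcases (T.traversals X R c).eq_zero_or_pos with h0 | hpos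
  · obtain ⟨x, hx⟩ := h.exists_mem_of_traversals_eq_zero hc h0
    exact hcK ((hbelow x (h.isBackEdge _ hx).isAncestor).symm.trans (hK (.inr ⟨(x, c), hx⟩)))
  · exact hcK (hK (.inl ⟨c, 0, hpos⟩))

theorem adj_tourGraph (h : T.IsSaving X R) (e) :
    G.Adj ((T.tourGraph X R).src e) ((T.tourGraph X R).tgt e) := by
  rcases e with ⟨c, i⟩ | b
  · refine T.adj_parent c fun hc => ?_
    have := i.pos
    rw [traversals, if_pos hc] at this
    exact this.false
  · exact (h.isBackEdge b b.2).adj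

end IsSaving

end Tour

section Conclusion

variable {V : Type*} {G : SimpleGraph V} {T : RootedSpanningTree G}

theorem ncard_covered_add_ncard_uncovered [Fintype V] :
    {c | T.IsCovered c}.ncard + {c | c ≠ T.root ∧ ¬T.IsCovered c}.ncard + 1 = Fintype.card V := by
  have hcompl : {c | c ≠ T.root ∧ ¬T.IsCovered c} = (insert T.root {c | T.IsCovered c})ᶜ := by
    ext c
    simp
  have hroot : T.root ∉ {c | T.IsCovered c} := fun h => h.ne_root rfl
  rw [hcompl, ← Nat.card_eq_fintype_card,
    ← Set.ncard_add_ncard_compl (insert T.root {c | T.IsCovered c}),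
    Set.ncard_insert_of_notMem hroot, add_right_comm]

theorem IsNormal.exists_closed_walk [Fintype V] (hT : T.IsNormal)
    (hG : ∀ B, IsBlock G B → IsLocallyNarrow G B) :
    ∃ (v : V) (w : G.Walk v v), (∀ u, u ∈ w.support) ∧
      3 * w.length + 4 ≤ 4 * Fintype.card V + 2 * {c | c ≠ T.root ∧ ¬T.IsCovered c}.ncard := by
  classical
  obtain ⟨S, hS⟩ := T.exists_isMinCover
  obtain ⟨X, R, hRS, hX, hcard, hXR⟩ := hS.prop.exists_sum_edgeBoundary_eq_zero
  have h : T.IsSaving X R := by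
    refine ⟨hX, fun b hb => hS.prop.isBackEdge b (hRS hb), fun c hc => ?_⟩
    refine le_trans (add_le_add ?_ ?_) (hS.card_filter_add_le hT hG hc)
    · exact Finset.card_le_card (Finset.filter_subset_filter _ hRS)
    · split_ifs with hcX hcov
      · rfl
      · exact absurd (hX c hcX) hcov
      · exact zero_le_one
      · rfl
  have : Nonempty V := ⟨T.root⟩
  obtain ⟨v, w, hw, hlen⟩ :=
    h.isConnected_tourGraph.exists_closed_walk (h.isEven_tourGraph hXR) h.adj_tourGraph
  have hedges := h.card_edges
  have hcovered := ncard_covered_add_ncard_uncovered (T := T)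
  exact ⟨v, w, hw, by lia⟩

end Conclusion

end RootedSpanningTree

theorem spanning_closed_walk_blockwise_subcubic_or_clawfree_general {V : Type*} [Fintype V]
    (G : SimpleGraph V) (hconn : G.Connected) (hG : ∀ B, IsBlock G B → IsLocallyNarrow G B) :
    ∃ (v : V) (w : G.Walk v v), (∀ u : V, u ∈ w.support) ∧
      (w.length : ℝ) ≤
        4 * Fintype.card V / 3 + 2 * {B : Set V | IsBlock G B}.ncard / 3 - 4 / 3 := by
  obtain ⟨T, hT⟩ := RootedSpanningTree.exists_isNormal hconn
  obtain ⟨v, w, hw, hlen⟩ := hT.exists_closed_walk hG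
  have hblocks := hT.ncard_uncovered_le
  have hreal : (3 * w.length + 4 : ℝ) ≤
      4 * Fintype.card V + 2 * {B : Set V | IsBlock G B}.ncard := by
    exact_mod_cast (by lia)
  exact ⟨v, w, hw, by linarith⟩

/-- If a connected simple graph `G` on `n` vertices has exactly
`k ≥ 1` blocks, each of which has maximum degree at most 3 or is claw-free, then
`G` has a spanning closed walk of length at most `4n/3 + 2k/3 − 4/3`. -/
theorem spanning_closed_walk_blockwise_subcubic_or_clawfree
    {V : Type*} [Fintype V]
    (G : SimpleGraph V)
    (hconn : G.Connected)
    (k : ℕ) (hk : 1 ≤ k)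
    (hblocks : {B : Set V | IsBlock G B}.ncard = k)
    (hblockprop : ∀ B : Set V, IsBlock G B →
      (∀ v ∈ B, {u | u ∈ B ∧ G.Adj v u}.ncard ≤ 3) ∨
      IsEmpty (completeBipartiteGraph (Fin 1) (Fin 3) ↪g (G.induce B))) :
    ∃ (v : V) (w : G.Walk v v), (∀ u : V, u ∈ w.support) ∧
      (w.length : ℝ) ≤ 4 * Fintype.card V / 3 + 2 * k / 3 - 4 / 3 := by
  subst hblocks
  exact spanning_closed_walk_blockwise_subcubic_or_clawfree_general G hconn fun B hB =>
    (hblockprop B hB).elim isLocallyNarrow_of_ncard_le_three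
      isLocallyNarrow_of_isEmpty_claw_embedding
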